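/- arXiv:1910.14439 — 4 statements merged into one kernel-verified Lean document; each statement's English description precedes it below -/
import Mathlib

section
/- Domination of ground states: for θ∈{+,per} and L=L_c=⌊e^{β/2}⌋, the Gibbs measure of the set of ground states satisfies π(𝒢) ≥ 1 − C·e^{-2β} for some constant C and all β sufficiently large, where 𝒢 is the set of configurations minimizing the Hamiltonian H^θ. -/
open scoped BigOperators

attribute [local instance] Classical.propDecidable

noncomputable section

namespace SPM

/-- Spin configurations on the box `[1:L]²`; `true` codes spin `+1`. -/
abbrev Config (L : ℕ) := Fin L × Fin L → Bool

/-- The spin at the integer point `y ∈ ℤ²`, with all-plus boundary conditions: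
sites outside `[1:L]²` carry spin `+1`. Site `i : Fin L × Fin L` sits at `(i₁+1, i₂+1)`. -/
def spinAt (L : ℕ) (σ : Config L) (y : ℤ × ℤ) : ℝ :=
  if ∃ i : Fin L × Fin L, ((i.1 : ℤ) + 1, (i.2 : ℤ) + 1) = y ∧ σ i = false then -1 else 1

/-- The plaquette variable `p_x(σ) = ∏_{y ∈ B_x} σ_y`. -/
def plaq (L : ℕ) (σ : Config L) (x : ℤ × ℤ) : ℝ :=
  spinAt L σ x * spinAt L σ (x.1 + 1, x.2) * spinAt L σ (x.1, x.2 + 1) *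
    spinAt L σ (x.1 + 1, x.2 + 1)

/-- The plaquettes meeting the box `[1:L]²` are indexed by `[0:L]²`. -/
def plaqSet (L : ℕ) : Finset (ℤ × ℤ) :=
  Finset.Icc (0 : ℤ) (L : ℤ) ×ˢ Finset.Icc (0 : ℤ) (L : ℤ)

/-- The set of defects `D(σ)`. -/
def defects (L : ℕ) (σ : Config L) : Finset (ℤ × ℤ) :=
  (plaqSet L).filter fun x => plaq L σ x = -1

/-- The Hamiltonian `H(σ) = -(1/2) ∑_x p_x(σ)`. -/
def ham (L : ℕ) (σ : Config L) : ℝ := -(1 / 2) * ∑ x ∈ plaqSet L, plaq L σ x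

/-- The Gibbs measure `π(σ) = e^{-βH(σ)}/Z`. -/
def gibbs (L : ℕ) (β : ℝ) (σ : Config L) : ℝ :=
  Real.exp (-β * ham L σ) / ∑ η : Config L, Real.exp (-β * ham L η)

/-- Flip one spin. -/
def flip (L : ℕ) (σ : Config L) (x : Fin L × Fin L) : Config L :=
  fun i => if i = x then !(σ i) else σ i

/-- Metropolis rate of the move `σ → η`: `min(1, e^{-β(H(η)-H(σ))})`. -/
def metroRate (L : ℕ) (β : ℝ) (σ η : Config L) : ℝ :=
  min 1 (Real.exp (-β * (ham L η - ham L σ)))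

/-- The Glauber generator, as a matrix. -/
def gen (L : ℕ) (β : ℝ) : Matrix (Config L) (Config L) ℝ :=
  fun σ η =>
    if η = σ then -(∑ x : Fin L × Fin L, metroRate L β σ (flip L σ x))
    else ∑ x : Fin L × Fin L, if η = flip L σ x then metroRate L β σ (flip L σ x) else 0

/-- Entrywise matrix exponential `∑ₖ Aᵏ/k!`. -/
def mexp {n : Type*} [Fintype n] [DecidableEq n] (A : Matrix n n ℝ) : Matrix n n ℝ :=
  fun i j => ∑' k : ℕ, (A ^ k) i j / (Nat.factorial k : ℝ)

/-- Total-variation distance between two (probability) vectors. -/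
def tv {n : Type*} [Fintype n] (μ ν : n → ℝ) : ℝ := (∑ s, |μ s - ν s|) / 2

/-- The `ε`-mixing time of the Glauber dynamics. -/
def tmix (L : ℕ) (β ε : ℝ) : ℝ :=
  sInf {t : ℝ | 0 < t ∧ ∀ σ : Config L, tv (mexp (t • gen L β) σ) (gibbs L β) < ε}

/-- The critical length scale `L_c = ⌊e^{β/2}⌋`. -/
def Lc (β : ℝ) : ℕ := ⌊Real.exp (β / 2)⌋₊

end SPM


namespace SPMP

/-- Spin configurations on the `L × L` torus; `true` codes spin `+1`. -/
abbrev ConfigP (L : ℕ) := Fin L × Fin L → Bool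

/-- The real spin value of a Boolean spin. -/
def sval (b : Bool) : ℝ := if b then 1 else -1

/-- Cyclic successor on `Fin L`. -/
def fsucc {L : ℕ} (i : Fin L) : Fin L := ⟨(i.val + 1) % L, Nat.mod_lt _ i.pos⟩

/-- The periodic plaquette variable
`p_x(σ) = σ_{(x₁,x₂)} σ_{(x₁+1,x₂)} σ_{(x₁,x₂+1)} σ_{(x₁+1,x₂+1)}` (coordinates mod `L`). -/
def plaqP (L : ℕ) (σ : ConfigP L) (x : Fin L × Fin L) : ℝ :=
  sval (σ x) * sval (σ (fsucc x.1, x.2)) * sval (σ (x.1, fsucc x.2)) *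
    sval (σ (fsucc x.1, fsucc x.2))

/-- The periodic Hamiltonian `H(σ) = -(1/2) ∑_x p_x(σ)`. -/
def hamP (L : ℕ) (σ : ConfigP L) : ℝ := -(1 / 2) * ∑ x : Fin L × Fin L, plaqP L σ x

/-- The Gibbs measure `π(σ) = e^{-βH(σ)}/Z`. -/
def gibbsP (L : ℕ) (β : ℝ) (σ : ConfigP L) : ℝ :=
  Real.exp (-β * hamP L σ) / ∑ η : ConfigP L, Real.exp (-β * hamP L η)

/-- Flip one spin. -/
def flipP (L : ℕ) (σ : ConfigP L) (x : Fin L × Fin L) : ConfigP L :=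
  fun i => if i = x then !(σ i) else σ i

/-- Metropolis rate of the move `σ → η`: `min(1, e^{-β(H(η)-H(σ))})`. -/
def metroRateP (L : ℕ) (β : ℝ) (σ η : ConfigP L) : ℝ :=
  min 1 (Real.exp (-β * (hamP L η - hamP L σ)))

/-- The Glauber generator of the periodic dynamics, as a matrix. -/
def genP (L : ℕ) (β : ℝ) : Matrix (ConfigP L) (ConfigP L) ℝ :=
  fun σ η =>
    if η = σ then -(∑ x : Fin L × Fin L, metroRateP L β σ (flipP L σ x))
    else ∑ x : Fin L × Fin L, if η = flipP L σ x then metroRateP L β σ (flipP L σ x) else 0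

/-- Entrywise matrix exponential `∑ₖ Aᵏ/k!`. -/
def mexp {n : Type*} [Fintype n] [DecidableEq n] (A : Matrix n n ℝ) : Matrix n n ℝ :=
  fun i j => ∑' k : ℕ, (A ^ k) i j / (Nat.factorial k : ℝ)

/-- Total-variation distance between two (probability) vectors. -/
def tv {n : Type*} [Fintype n] (μ ν : n → ℝ) : ℝ := (∑ s, |μ s - ν s|) / 2

/-- The `ε`-mixing time of the periodic Glauber dynamics. -/
def tmixP (L : ℕ) (β ε : ℝ) : ℝ :=
  sInf {t : ℝ | 0 < t ∧ ∀ σ : ConfigP L, tv (mexp (t • genP L β) σ) (gibbsP L β) < ε}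

/-- The set of ground states: minimizers of the Hamiltonian. -/
def GroundP (L : ℕ) : Set (ConfigP L) := {σ | ∀ η : ConfigP L, hamP L σ ≤ hamP L η}

/-- The critical length scale `L_c = ⌊e^{β/2}⌋`. -/
def Lc (β : ℝ) : ℕ := ⌊Real.exp (β / 2)⌋₊

end SPMP

namespace SPM

/-- Ground states of the all-plus model: minimizers of the Hamiltonian. -/
def Ground (L : ℕ) : Set (Config L) := {σ | ∀ η : Config L, ham L σ ≤ ham L η}

end SPM

open SPM SPMP

/-!
The set of defects of a configuration meets every row and every column in an even number of
plaquettes, so it is an even subgraph of a complete bipartite graph `K_{N,N}`. The map from spins to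
plaquette variables is a group homomorphism, so each such set is the defect set of at most `|𝒢|`
configurations, and `π(𝒢)⁻¹` is at most the generating function of the even subgraphs at `e^{-β}`.
By Kramers–Wannier duality this function is the normalized high-temperature expansion of the Ising
model on `K_{N,N}` at the coupling `κ` with `tanh κ = e^{-β}`. That model is subcritical as long as
`N κ < 1`, and a Gaussian linearization of its partition function gives the bound
`1 / √(1 - N⁴κ⁴)`. At `N ≈ L_c` one has `N⁴κ⁴ ≈ e^{2β} e^{-4β} = e^{-2β}`.

The all-plus box `[1:L]²` is the torus of side `L + 1` with row `0` and column `0` frozen to `+1`: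
this keeps the homomorphism property and the parity of the defects.
-/

namespace SquarePlaquette

open Finset Real MeasureTheory ProbabilityTheory

section SquareExponentialMoment

lemma integral_exp_mul_sq_gaussianReal {c : ℝ} (hc : 2 * c < 1) :
    ∫ x, exp (c * x ^ 2) ∂gaussianReal 0 1 = 1 / √(1 - 2 * c) := by
  have hdensity (x : ℝ) : gaussianPDFReal 0 1 x • exp (c * x ^ 2) =
      (√(2 * π))⁻¹ * exp (-(1 / 2 - c) * x ^ 2) := by
    rw [gaussianPDFReal, smul_eq_mul, mul_assoc, ← exp_add]
    simp only [NNReal.coe_one, mul_one, sub_zero]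
    ring_nf
  rw [integral_gaussianReal_eq_integral_smul one_ne_zero]
  simp_rw [hdensity]
  rw [integral_const_mul, integral_gaussian, ← sqrt_inv, ← sqrt_mul (by positivity),
    one_div (√_), ← sqrt_inv]
  congr 1
  have : 1 - 2 * c ≠ 0 := by linarith
  have : 1 / 2 - c ≠ 0 := by linarith
  field_simp

lemma integrable_exp_mul_sq_gaussianReal {c : ℝ} (hc : 2 * c < 1) :
    Integrable (fun x ↦ exp (c * x ^ 2)) (gaussianReal 0 1) := by
  refine Integrable.of_integral_ne_zero ?_
  rw [integral_exp_mul_sq_gaussianReal hc]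
  exact (one_div_pos.2 (sqrt_pos.2 (by linarith))).ne'

lemma exp_mul_sq_eq_integral_gaussianReal {a : ℝ} (ha : 0 ≤ a) (x : ℝ) :
    exp (a * x ^ 2) = ∫ g, exp (√(2 * a) * x * g) ∂gaussianReal 0 1 := by
  have hmgf := congrFun (mgf_id_gaussianReal (μ := 0) (v := 1)) (√(2 * a) * x)
  simp only [mgf, id_eq] at hmgf
  rw [hmgf, mul_pow, sq_sqrt (by positivity)]
  simp only [NNReal.coe_one]
  ring_nf

/-- Linearizing the square by an auxiliary Gaussian `g` reduces the claim to the moment generating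
function at `√(2a) g`, whose bound is again a Gaussian integral. -/
lemma sum_exp_mul_sq_le {ι : Type*} [Fintype ι] {f : ι → ℝ} {M v a : ℝ}
    (hf : ∀ t, ∑ i, exp (t * f i) ≤ M * exp (v * t ^ 2 / 2)) (ha : 0 ≤ a) (hva : 2 * (v * a) < 1) :
    ∑ i, exp (a * f i ^ 2) ≤ M / √(1 - 2 * (v * a)) := by
  have hint (i : ι) : Integrable (fun g ↦ exp (√(2 * a) * f i * g)) (gaussianReal 0 1) :=
    integrable_exp_mul_gaussianReal _
  calc ∑ i, exp (a * f i ^ 2)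
      = ∫ g, ∑ i, exp (√(2 * a) * f i * g) ∂gaussianReal 0 1 := by
        simp_rw [exp_mul_sq_eq_integral_gaussianReal ha]
        exact (integral_finsetSum _ fun i _ ↦ hint i).symm
    _ ≤ ∫ g, M * exp (v * a * g ^ 2) ∂gaussianReal 0 1 := by
        refine integral_mono (integrable_finsetSum _ fun i _ ↦ hint i)
          ((integrable_exp_mul_sq_gaussianReal hva).const_mul M) fun g ↦ ?_
        convert! hf (√(2 * a) * g) using 3
        · ring_nf
        · rw [mul_pow, sq_sqrt (by positivity)]
          ring
    _ = M / √(1 - 2 * (v * a)) := by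
        rw [integral_const_mul, integral_exp_mul_sq_gaussianReal hva, mul_one_div]

end SquareExponentialMoment

section BipartiteIsing

variable {ι m n : Type*} [Fintype ι] [Fintype m] [Fintype n]

lemma sum_exp_mul_sum_units (t : ℝ) :
    ∑ s : ι → ℤˣ, exp (t * ∑ i, ((s i : ℤ) : ℝ)) = (2 * cosh t) ^ Fintype.card ι := by
  simp_rw [mul_sum, exp_sum]
  rw [← Fintype.prod_sum fun (_ : ι) (ε : ℤˣ) ↦ exp (t * ((ε : ℤ) : ℝ))]
  simp [cosh_eq, mul_div_cancel₀]

lemma sum_exp_mul_sum_units_le (t : ℝ) :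
    ∑ s : ι → ℤˣ, exp (t * ∑ i, ((s i : ℤ) : ℝ)) ≤
      2 ^ Fintype.card ι * exp (Fintype.card ι * t ^ 2 / 2) := by
  rw [sum_exp_mul_sum_units, mul_pow, mul_div_assoc, exp_nat_mul]
  gcongr
  exact cosh_le_exp_half_sq t

/-- The partition function of the Ising model on the complete bipartite graph with parts `m`
and `n`, at coupling `κ`. -/
def bipartiteIsing (m n : Type*) [Fintype m] [Fintype n] (κ : ℝ) : ℝ :=
  ∑ s : m → ℤˣ, ∑ t : n → ℤˣ, exp (κ * (∑ i, ((s i : ℤ) : ℝ)) * ∑ j, ((t j : ℤ) : ℝ))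

lemma bipartiteIsing_le {κ : ℝ} (hκ : Fintype.card m * Fintype.card n * κ ^ 2 < 1) :
    bipartiteIsing m n κ ≤
      2 ^ (Fintype.card m + Fintype.card n) / √(1 - Fintype.card m * Fintype.card n * κ ^ 2) := by
  set M : ℝ := (Fintype.card m : ℝ)
  set N : ℝ := (Fintype.card n : ℝ)
  have hvar : 2 * (M * (N * κ ^ 2 / 2)) = M * N * κ ^ 2 := by ring
  calc bipartiteIsing m n κ
      ≤ ∑ s : m → ℤˣ, 2 ^ Fintype.card n *
          exp (N * κ ^ 2 / 2 * (∑ i, ((s i : ℤ) : ℝ)) ^ 2) := by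
        refine sum_le_sum fun s _ ↦ (sum_exp_mul_sum_units_le _).trans_eq ?_
        change _ * exp (N * _ / 2) = _
        ring_nf
    _ ≤ 2 ^ Fintype.card n * (2 ^ Fintype.card m / √(1 - M * N * κ ^ 2)) := by
        rw [← mul_sum, ← hvar]
        gcongr
        exact sum_exp_mul_sq_le sum_exp_mul_sum_units_le (by positivity) (hvar.trans_lt hκ)
    _ = _ := by rw [pow_add]; ring

lemma one_add_tanh_mul_units (κ : ℝ) (ε : ℤˣ) :
    1 + tanh κ * ((ε : ℤ) : ℝ) = exp (κ * ((ε : ℤ) : ℝ)) / cosh κ := by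
  rw [tanh_eq_sinh_div_cosh, eq_div_iff (cosh_pos κ).ne']
  rcases Int.units_eq_one_or ε with rfl | rfl
  · simp [add_mul, (cosh_pos κ).ne', cosh_add_sinh]
  · simp [← sub_eq_add_neg, sub_mul, (cosh_pos κ).ne', cosh_sub_sinh]

lemma prod_one_add_tanh_mul_units (κ : ℝ) (s : m → ℤˣ) (t : n → ℤˣ) :
    ∏ x : m × n, (1 + tanh κ * (((s x.1 * t x.2 : ℤˣ) : ℤ) : ℝ)) =
      exp (κ * (∑ i, ((s i : ℤ) : ℝ)) * ∑ j, ((t j : ℤ) : ℝ)) /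
        cosh κ ^ (Fintype.card m * Fintype.card n) := by
  simp_rw [one_add_tanh_mul_units, prod_div_distrib, ← exp_sum, ← mul_sum, Units.val_mul,
    Int.cast_mul, Fintype.sum_prod_type, mul_assoc κ, Fintype.sum_mul_sum]
  simp

end BipartiteIsing

section EvenSubgraphs

variable {α ι m n : Type*} [Fintype ι] [Fintype m] [Fintype n]

/-- A set `D` of edges of the complete bipartite graph with parts `m` and `n` in which every
vertex has even degree; as a set of cells of an `m × n` array, it meets each row and each column
in an even number of cells. -/
def IsEvenSubgraph (D : Finset (m × n)) : Prop :=
  (∀ i, Even #{x ∈ D | x.1 = i}) ∧ ∀ j, Even #{x ∈ D | x.2 = j}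

lemma sum_prod_units_comp (D : Finset α) (g : α → ι) :
    ∑ s : ι → ℤˣ, ∏ x ∈ D, ((s (g x) : ℤ) : ℝ) =
      if ∀ i, Even #{x ∈ D | g x = i} then 2 ^ Fintype.card ι else 0 := by
  have hfiber (s : ι → ℤˣ) : ∏ x ∈ D, ((s (g x) : ℤ) : ℝ) =
      ∏ i, ((s i : ℤ) : ℝ) ^ #{x ∈ D | g x = i} := by
    simp_rw [← prod_fiberwise' D g fun i ↦ ((s i : ℤ) : ℝ), prod_const]
  simp_rw [hfiber]
  rw [← Fintype.prod_sum fun (i : ι) (ε : ℤˣ) ↦ ((ε : ℤ) : ℝ) ^ #{x ∈ D | g x = i}]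
  simp only [UnitsInt.univ, sum_pair (units_ne_neg_self _), Units.val_one, Units.val_neg,
    Int.cast_neg, Int.cast_one, one_pow]
  split_ifs with h
  · simp [(h _).neg_one_pow, one_add_one_eq_two]
  · obtain ⟨i, hi⟩ := not_forall.1 h
    exact prod_eq_zero (mem_univ i) (by rw [(Nat.not_even_iff_odd.1 hi).neg_one_pow]; norm_num)

lemma sum_prod_units_mul_units (D : Finset (m × n)) :
    ∑ s : m → ℤˣ, ∑ t : n → ℤˣ, ∏ x ∈ D, (((s x.1 * t x.2 : ℤˣ) : ℤ) : ℝ) =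
      if IsEvenSubgraph D then 2 ^ (Fintype.card m + Fintype.card n) else 0 := by
  simp_rw [Units.val_mul, Int.cast_mul, prod_mul_distrib]
  rw [← Fintype.sum_mul_sum, sum_prod_units_comp D Prod.fst, sum_prod_units_comp D Prod.snd,
    pow_add, ite_zero_mul_ite_zero]
  congr

/-- The generating function of even subgraphs by number of edges. -/
def evenSubgraphSum (m n : Type*) [Fintype m] [Fintype n] (q : ℝ) : ℝ :=
  ∑ D : Finset (m × n) with IsEvenSubgraph D, q ^ #D

/-- The high-temperature expansion: averaging over the spins keeps exactly the even subgraphs. -/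
lemma two_pow_mul_evenSubgraphSum (q : ℝ) :
    2 ^ (Fintype.card m + Fintype.card n) * evenSubgraphSum m n q =
      ∑ s : m → ℤˣ, ∑ t : n → ℤˣ,
        ∏ x : m × n, (1 + q * (((s x.1 * t x.2 : ℤˣ) : ℤ) : ℝ)) := by
  simp_rw [prod_one_add, powerset_univ, prod_mul_distrib, prod_const]
  simp_rw [sum_comm (t := (univ : Finset (Finset (m × n)))), ← mul_sum, sum_prod_units_mul_units]
  simp only [evenSubgraphSum, sum_filter, mul_sum, mul_ite, mul_zero]
  simp only [mul_comm]

lemma evenSubgraphSum_nonneg {q : ℝ} (hq : 0 ≤ q) : 0 ≤ evenSubgraphSum m n q :=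
  sum_nonneg fun _ _ ↦ pow_nonneg hq _

lemma one_add_mul_sq_le_cosh_pow (κ : ℝ) (k : ℕ) : 1 + k * κ ^ 2 ≤ (cosh κ ^ k) ^ 2 := by
  have hsinh : κ ^ 2 ≤ sinh κ ^ 2 :=
    sq_le_sq.2 ((self_le_sinh_iff.2 (abs_nonneg κ)).trans_eq (abs_sinh κ).symm)
  calc 1 + k * κ ^ 2 ≤ (1 + κ ^ 2) ^ k :=
        one_add_mul_le_pow (by linarith [sq_nonneg κ]) k
    _ ≤ (cosh κ ^ 2) ^ k := by
        rw [cosh_sq']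
        gcongr
    _ = (cosh κ ^ k) ^ 2 := pow_right_comm _ _ _

lemma evenSubgraphSum_tanh_le {κ : ℝ} (hκ : Fintype.card m * Fintype.card n * κ ^ 2 < 1) :
    evenSubgraphSum m n (tanh κ) ≤
      1 / √(1 - (Fintype.card m * Fintype.card n * κ ^ 2) ^ 2) := by
  have hcosh := one_add_mul_sq_le_cosh_pow κ (Fintype.card m * Fintype.card n)
  push_cast at hcosh
  set y : ℝ := Fintype.card m * Fintype.card n * κ ^ 2
  have hy0 : 0 ≤ y := by positivity
  have hexpansion : 2 ^ (Fintype.card m + Fintype.card n) * evenSubgraphSum m n (tanh κ) =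
      bipartiteIsing m n κ / cosh κ ^ (Fintype.card m * Fintype.card n) := by
    simp_rw [two_pow_mul_evenSubgraphSum, prod_one_add_tanh_mul_units, bipartiteIsing, sum_div]
  have hsqrt : √(1 - y ^ 2) ≤ √(1 - y) * cosh κ ^ (Fintype.card m * Fintype.card n) := by
    rw [show 1 - y ^ 2 = (1 - y) * (1 + y) by ring, sqrt_mul (by linarith)]
    gcongr
    exact sqrt_le_iff.2 ⟨by positivity, hcosh⟩
  refine le_of_mul_le_mul_left ?_ (pow_pos two_pos (Fintype.card m + Fintype.card n))
  calc (2 : ℝ) ^ (Fintype.card m + Fintype.card n) * evenSubgraphSum m n (tanh κ)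
      ≤ 2 ^ (Fintype.card m + Fintype.card n) / √(1 - y) /
          cosh κ ^ (Fintype.card m * Fintype.card n) := by
        rw [hexpansion]
        gcongr
        exact bipartiteIsing_le hκ
    _ ≤ 2 ^ (Fintype.card m + Fintype.card n) * (1 / √(1 - y ^ 2)) := by
        rw [div_div, mul_one_div]
        gcongr
        exact sqrt_pos.2 (by nlinarith)

lemma artanh_le_div_one_sub {q : ℝ} (hq0 : 0 ≤ q) (hq : q < 1) : artanh q ≤ q / (1 - q) := by
  have hlog := log_le_sub_one_of_pos (x := (1 + q) / (1 - q)) (div_pos (by linarith) (by linarith))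
  have heq : (1 + q) / (1 - q) - 1 = 2 * (q / (1 - q)) := by
    have : 1 - q ≠ 0 := by linarith
    field_simp
    ring
  rw [artanh_eq_half_log ⟨by linarith, hq.le⟩]
  linarith

lemma evenSubgraphSum_le {q : ℝ} (hq0 : 0 ≤ q) (hq : q ≤ 1 / 2)
    (hsmall : 4 * (Fintype.card m * Fintype.card n) * q ^ 2 < 1) :
    evenSubgraphSum m n q ≤ 1 / √(1 - (4 * (Fintype.card m * Fintype.card n) * q ^ 2) ^ 2) := by
  have hκ : artanh q ≤ 2 * q := (artanh_le_div_one_sub hq0 (by linarith)).trans <| by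
    rw [div_le_iff₀ (by linarith)]
    nlinarith
  have hκ0 : 0 ≤ artanh q := artanh_nonneg hq0
  have hle : Fintype.card m * Fintype.card n * artanh q ^ 2 ≤
      4 * (Fintype.card m * Fintype.card n) * q ^ 2 := by
    calc (Fintype.card m * Fintype.card n * artanh q ^ 2 : ℝ)
        ≤ Fintype.card m * Fintype.card n * (2 * q) ^ 2 := by gcongr
      _ = 4 * (Fintype.card m * Fintype.card n) * q ^ 2 := by ring
  have heven := evenSubgraphSum_tanh_le (hle.trans_lt hsmall)
  rw [tanh_artanh ⟨by linarith, by linarith⟩] at heven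
  refine heven.trans ?_
  gcongr
  exact sqrt_pos.2 (sub_pos.2 (pow_lt_one₀ (by positivity) hsmall two_ne_zero))

lemma evenSubgraphSum_of_isEmpty [IsEmpty (m × n)] (q : ℝ) : evenSubgraphSum m n q = 1 := by
  have heven : IsEvenSubgraph (∅ : Finset (m × n)) := by simp [IsEvenSubgraph]
  rw [evenSubgraphSum, sum_filter, Fintype.sum_unique, Subsingleton.elim default ∅, if_pos heven,
    card_empty, pow_zero]

lemma one_sub_mul_evenSubgraphSum_le_one {q : ℝ} (hq0 : 0 ≤ q) :
    (1 - (4 * (Fintype.card m * Fintype.card n) * q ^ 2) ^ 2) * evenSubgraphSum m n q ≤ 1 := by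
  rcases isEmpty_or_nonempty (m × n) with hempty | hnonempty
  · rw [evenSubgraphSum_of_isEmpty, mul_one]
    exact sub_le_self _ (sq_nonneg _)
  have hcard : (1 : ℝ) ≤ Fintype.card m * Fintype.card n := by
    exact_mod_cast (Fintype.card_prod m n).symm ▸ Fintype.card_pos (α := m × n)
  have hbound (hsmall : 4 * (Fintype.card m * Fintype.card n) * q ^ 2 < 1) :=
    evenSubgraphSum_le hq0 (by nlinarith) hsmall
  set y : ℝ := 4 * (Fintype.card m * Fintype.card n) * q ^ 2
  rcases lt_or_ge y 1 with hy | hy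
  · calc (1 - y ^ 2) * evenSubgraphSum m n q
        ≤ (1 - y ^ 2) * (1 / √(1 - y ^ 2)) := by
          gcongr
          · exact sub_nonneg.2 (pow_le_one₀ (by positivity) hy.le)
          · exact hbound hy
      _ = √(1 - y ^ 2) := by rw [mul_one_div, div_sqrt]
      _ ≤ 1 := sqrt_le_one.2 (sub_le_self _ (sq_nonneg _))
  · have hnonpos : 1 - y ^ 2 ≤ 0 := sub_nonpos.2 (one_le_pow₀ hy)
    exact (mul_nonpos_of_nonpos_of_nonneg hnonpos (evenSubgraphSum_nonneg hq0)).trans zero_le_one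

end EvenSubgraphs

section GroundMass

variable {Ω Γ : Type*} [Fintype Ω] [Fintype Γ]

/-- The set `𝒢` of ground states of a Hamiltonian; unfolds to `Ground L` for `ham L` and to
`GroundP L` for `hamP L`. -/
def groundStates (H : Ω → ℝ) : Set Ω := {σ | ∀ η, H σ ≤ H η}

/-- The mass that the Gibbs measure with Hamiltonian `H` at inverse temperature `β` gives to the
ground states of `H`. -/
def groundMass (H : Ω → ℝ) (β : ℝ) : ℝ :=
  ∑ σ with σ ∈ groundStates H, exp (-β * H σ) / ∑ η, exp (-β * H η)

lemma groundMass_comp_equiv (e : Ω ≃ Γ) (H : Γ → ℝ) (β : ℝ) :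
    groundMass (fun σ ↦ H (e σ)) β = groundMass H β := by
  unfold groundMass
  rw [e.sum_comp fun η ↦ exp (-β * H η)]
  refine sum_equiv e (fun σ ↦ ?_) fun _ _ ↦ rfl
  rw [mem_filter_univ, mem_filter_univ]
  exact (e.surjective.forall (p := fun η ↦ H (e σ) ≤ H η)).symm

lemma groundMass_add_const (H : Ω → ℝ) (c β : ℝ) :
    groundMass (fun σ ↦ H σ + c) β = groundMass H β := by
  have hground : groundStates (fun σ ↦ H σ + c) = groundStates H := by
    simp only [groundStates, add_le_add_iff_right]
  simp only [groundMass, hground, mul_add, exp_add, ← sum_mul,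
    mul_div_mul_right _ _ (exp_pos _).ne']

lemma groundMass_natCast {f : Ω → ℕ} (hf : ∃ σ, f σ = 0) (β : ℝ) :
    groundMass (fun σ ↦ (f σ : ℝ)) β = #{σ | f σ = 0} / ∑ σ, exp (-β) ^ f σ := by
  obtain ⟨σ₀, hσ₀⟩ := hf
  have hmin (σ : Ω) : σ ∈ groundStates (fun η ↦ (f η : ℝ)) ↔ f σ = 0 :=
    ⟨fun h ↦ Nat.le_zero.1 (hσ₀ ▸ Nat.cast_le.1 (h σ₀)), fun h η ↦ by simp [h]⟩
  have hexp (σ : Ω) : exp (-β * f σ) = exp (-β) ^ f σ := by rw [mul_comm, exp_nat_mul]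
  simp only [groundMass, hmin, hexp]
  rw [← sum_div, sum_congr rfl fun σ hσ ↦ by rw [(mem_filter_univ σ).1 hσ, pow_zero]]
  simp

end GroundMass

section Defects

variable {α γ Γ m n : Type*} [Fintype α] [Group Γ] [Fintype Γ] [Fintype m] [Fintype n]

/-- The set of defects of a family `p` of plaquette variables. -/
def defectSet (p : α → ℤˣ) : Finset α := {x | p x = -1}

lemma defectSet_injective : Function.Injective (defectSet : (α → ℤˣ) → Finset α) := by
  intro p p' h
  funext x
  have hx : p x = -1 ↔ p' x = -1 := by simpa [defectSet] using congrArg (x ∈ ·) h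
  rcases Int.units_eq_one_or (p x) with h1 | h1 <;>
    rcases Int.units_eq_one_or (p' x) with h2 | h2 <;> simp_all

lemma defectSet_one : defectSet (1 : α → ℤˣ) = ∅ := by
  simp [defectSet]

lemma sum_units_eq_card_sub (p : α → ℤˣ) :
    ∑ x, ((p x : ℤ) : ℝ) = Fintype.card α - 2 * #(defectSet p) := by
  have hval (x : α) : ((p x : ℤ) : ℝ) = 1 - 2 * if p x = -1 then 1 else 0 := by
    rcases Int.units_eq_one_or (p x) with h | h <;> norm_num [h]
  simp only [hval, sum_sub_distrib, ← mul_sum, sum_boole]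
  simp [defectSet]

lemma even_card_filter_defectSet {p : α → ℤˣ} {g : α → γ} {c : γ}
    (hp : ∏ x with g x = c, p x = 1) : Even #{x ∈ defectSet p | g x = c} := by
  have hval (x : α) : (if p x = -1 then (-1 : ℤˣ) else 1) = p x := by
    rcases Int.units_eq_one_or (p x) with h | h <;> simp [h]
  rw [← neg_one_pow_eq_one_iff_even (R := ℤˣ) (by decide), ← hp, ← prod_const, defectSet,
    filter_comm, prod_filter]
  exact prod_congr rfl fun x _ ↦ by convert! hval x

/-- A nonempty fiber of the homomorphism `φ` is a coset of its kernel. -/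
lemma card_defectSet_eq_le (φ : Γ →* (α → ℤˣ)) (D : Finset α) :
    #{σ | defectSet (φ σ) = D} ≤ #{σ | #(defectSet (φ σ)) = 0} := by
  have hkernel (σ : Γ) : #(defectSet (φ σ)) = 0 ↔ φ σ = 1 := by
    rw [card_eq_zero, ← defectSet_one, defectSet_injective.eq_iff]
  rcases ({σ | defectSet (φ σ) = D} : Finset Γ).eq_empty_or_nonempty with hempty | ⟨τ, hτ⟩
  · simp [hempty]
  · have hfiber (σ : Γ) : defectSet (φ σ) = D ↔ φ σ = φ τ := by
      rw [← (mem_filter_univ τ).1 hτ, defectSet_injective.eq_iff]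
    simp only [hfiber, hkernel]
    convert! (MonoidHom.card_fiber_eq_of_mem_range φ (Set.mem_range_self τ) ⟨1, map_one φ⟩).le

lemma sum_pow_card_defectSet_le {φ : Γ →* (m × n → ℤˣ)}
    (heven : ∀ σ, IsEvenSubgraph (defectSet (φ σ))) {q : ℝ} (hq : 0 ≤ q) :
    ∑ σ, q ^ #(defectSet (φ σ)) ≤ #{σ | #(defectSet (φ σ)) = 0} * evenSubgraphSum m n q := by
  rw [← sum_fiberwise_of_maps_to (t := ({D | IsEvenSubgraph D} : Finset (Finset (m × n))))
    fun σ _ ↦ (mem_filter_univ _).2 (heven σ), evenSubgraphSum, mul_sum]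
  refine sum_le_sum fun D _ ↦ ?_
  rw [sum_congr rfl fun σ hσ ↦ by rw [(mem_filter_univ σ).1 hσ], sum_const, nsmul_eq_mul]
  refine mul_le_mul_of_nonneg_right (Nat.cast_le.2 ?_) (pow_nonneg hq _)
  convert! card_defectSet_eq_le φ D

theorem one_sub_le_groundMass {φ : Γ →* (m × n → ℤˣ)}
    (heven : ∀ σ, IsEvenSubgraph (defectSet (φ σ))) (β : ℝ) :
    1 - (4 * (Fintype.card m * Fintype.card n) * exp (-β) ^ 2) ^ 2 ≤
      groundMass (fun σ ↦ -(1 / 2) * ∑ x, ((φ σ x : ℤ) : ℝ)) β := by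
  have henergy (σ : Γ) : -(1 / 2) * ∑ x, ((φ σ x : ℤ) : ℝ) =
      #(defectSet (φ σ)) + -(Fintype.card (m × n) / 2 : ℝ) := by
    rw [sum_units_eq_card_sub]
    ring
  have hpartition : 0 < ∑ σ, exp (-β) ^ #(defectSet (φ σ)) :=
    sum_pos (fun _ _ ↦ by positivity) univ_nonempty
  simp_rw [henergy, groundMass_add_const]
  rw [groundMass_natCast ⟨1, by rw [map_one, defectSet_one, card_empty]⟩, le_div_iff₀ hpartition]
  set δ : ℝ := (4 * (Fintype.card m * Fintype.card n) * exp (-β) ^ 2) ^ 2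
  set K : ℝ := (#{σ | #(defectSet (φ σ)) = 0} : ℝ)
  rcases le_total δ 1 with hδ | hδ
  · calc (1 - δ) * ∑ σ, exp (-β) ^ #(defectSet (φ σ))
        ≤ (1 - δ) * (K * evenSubgraphSum m n (exp (-β))) := by
          exact mul_le_mul_of_nonneg_left (sum_pow_card_defectSet_le heven (exp_pos _).le)
            (sub_nonneg.2 hδ)
      _ = K * ((1 - δ) * evenSubgraphSum m n (exp (-β))) := mul_left_comm _ _ _
      _ ≤ K := mul_le_of_le_one_right (Nat.cast_nonneg _)
          (one_sub_mul_evenSubgraphSum_le_one (exp_pos _).le)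
  · exact (mul_nonpos_of_nonpos_of_nonneg (sub_nonpos.2 hδ) hpartition.le).trans
      (Nat.cast_nonneg _)

end Defects

section Torus

lemma four_mul_mul_exp_sq_sq (N β : ℝ) :
    (4 * (N * N) * exp (-β) ^ 2) ^ 2 = 16 * N ^ 4 * exp (-4 * β) := by
  have hexp : exp (-4 * β) = exp (-β) ^ 4 := by
    rw [← exp_nat_mul]
    norm_num
  rw [hexp]
  ring

/-- The real spin `+1`, `-1` coded by a Boolean, as a unit of `ℤ`. -/
def boolEquivUnits : Bool ≃ ℤˣ where
  toFun b := if b then 1 else -1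
  invFun ε := ε = 1
  left_inv b := by cases b <;> simp
  right_inv ε := by rcases Int.units_eq_one_or ε with rfl | rfl <;> simp

/-- Boolean spin configurations as `ℤˣ`-valued ones, which form a group. -/
def spins (ι : Type*) : (ι → Bool) ≃ (ι → ℤˣ) := Equiv.piCongrRight fun _ ↦ boolEquivUnits

lemma coe_spins {ι : Type*} (σ : ι → Bool) (i : ι) : ((spins ι σ i : ℤ) : ℝ) = sval (σ i) := by
  cases h : σ i <;> simp [spins, boolEquivUnits, sval, h]

lemma fsucc_eq_finRotate {L : ℕ} (i : Fin L) : fsucc i = finRotate L i := by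
  have := i.neZero
  rw [finRotate_apply]
  exact Fin.ext (by simp [fsucc, Fin.val_add])

/-- The plaquette variables on the `L × L` torus. -/
def torusPlaquettes (L : ℕ) : (Fin L × Fin L → ℤˣ) →* (Fin L × Fin L → ℤˣ) where
  toFun s x := s x * s (fsucc x.1, x.2) * s (x.1, fsucc x.2) * s (fsucc x.1, fsucc x.2)
  map_one' := by ext; simp
  map_mul' s t := by
    funext x
    simp only [Pi.mul_apply, mul_assoc, mul_left_comm]

lemma plaqP_eq_torusPlaquettes {L : ℕ} (σ : ConfigP L) (x : Fin L × Fin L) :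
    plaqP L σ x = ((torusPlaquettes L (spins _ σ) x : ℤ) : ℝ) := by
  simp [plaqP, torusPlaquettes, coe_spins]

lemma prod_fiber_mul_perm_eq_one {α γ : Type*} [Fintype α] (e : Equiv.Perm α) {g : α → γ}
    (hg : ∀ x, g (e x) = g x) (r : α → ℤˣ) (c : γ) : ∏ x with g x = c, r x * r (e x) = 1 := by
  have hshift : ∏ x with g x = c, r (e x) = ∏ x with g x = c, r x :=
    prod_equiv e (by simp [hg]) fun _ _ ↦ rfl
  rw [prod_mul_distrib, hshift, ← prod_mul_distrib]
  exact prod_eq_one fun x _ ↦ Int.units_mul_self (r x)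

lemma isEvenSubgraph_torusPlaquettes {L : ℕ} (s : Fin L × Fin L → ℤˣ) :
    IsEvenSubgraph (defectSet (torusPlaquettes L s)) := by
  refine ⟨fun i ↦ even_card_filter_defectSet ?_, fun j ↦ even_card_filter_defectSet ?_⟩
  · rw [← prod_fiber_mul_perm_eq_one ((Equiv.refl _).prodCongr (finRotate L)) (g := Prod.fst)
      (fun _ ↦ rfl) (fun x ↦ s x * s (fsucc x.1, x.2)) i]
    refine prod_congr rfl fun x _ ↦ ?_
    change _ = _ * (s (x.1, finRotate L x.2) * s (fsucc x.1, finRotate L x.2))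
    rw [← fsucc_eq_finRotate, ← mul_assoc]
    rfl
  · rw [← prod_fiber_mul_perm_eq_one ((finRotate L).prodCongr (Equiv.refl _)) (g := Prod.snd)
      (fun _ ↦ rfl) (fun x ↦ s x * s (x.1, fsucc x.2)) j]
    refine prod_congr rfl fun x _ ↦ ?_
    change _ = _ * (s (finRotate L x.1, x.2) * s (finRotate L x.1, fsucc x.2))
    rw [← fsucc_eq_finRotate, ← mul_assoc, mul_right_comm (s x)]
    rfl

theorem one_sub_le_groundMass_hamP (L : ℕ) (β : ℝ) :
    1 - 16 * (L : ℝ) ^ 4 * exp (-4 * β) ≤ groundMass (hamP L) β := by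
  have hham : hamP L = fun σ ↦ -(1 / 2) * ∑ x, ((torusPlaquettes L (spins _ σ) x : ℤ) : ℝ) := by
    funext σ
    simp only [hamP, plaqP_eq_torusPlaquettes]
  rw [hham, groundMass_comp_equiv (spins _)
    fun s ↦ -(1 / 2) * ∑ x, ((torusPlaquettes L s x : ℤ) : ℝ)]
  simpa only [four_mul_mul_exp_sq_sq, Fintype.card_fin] using
    one_sub_le_groundMass (isEvenSubgraph_torusPlaquettes (L := L)) β

end Torus

section AllPlusBox

variable {L : ℕ}

lemma natCast_add_one_eq_natCast_iff (i : Fin L) (k : Fin (L + 1)) :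
    (i : ℤ) + 1 = k ↔ i.succ = k := by
  rw [Fin.ext_iff, Fin.val_succ]
  omega

lemma natCast_add_one_eq_natCast_add_one_iff (i : Fin L) (k : Fin (L + 1)) :
    (i : ℤ) + 1 = k + 1 ↔ i.succ = fsucc k := by
  have := i.isLt
  rw [Fin.ext_iff, Fin.val_succ]
  change _ ↔ _ = (k.val + 1) % (L + 1)
  rcases (Nat.lt_succ_iff.1 k.isLt).lt_or_eq with hk | hk
  · rw [Nat.mod_eq_of_lt (by omega)]
    omega
  · rw [hk, Nat.mod_self]
    omega

/-- The embedding of the configurations on the box `[1:L]²` into those on the torus of side `L + 1`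
whose spins on row `0` and on column `0` are `+1`. -/
def extendByPlus (L : ℕ) : (Fin L × Fin L → ℤˣ) →* (Fin (L + 1) × Fin (L + 1) → ℤˣ) :=
  Function.ExtendByOne.hom ℤˣ (Prod.map Fin.succ Fin.succ)

lemma spinAt_eq_extendByPlus (σ : Config L) {a b : ℤ} {k l : Fin (L + 1)}
    (ha : ∀ i : Fin L, (i : ℤ) + 1 = a ↔ i.succ = k)
    (hb : ∀ i : Fin L, (i : ℤ) + 1 = b ↔ i.succ = l) :
    spinAt L σ (a, b) = ((extendByPlus L (spins _ σ) (k, l) : ℤ) : ℝ) := by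
  have hinj : Function.Injective (Prod.map Fin.succ Fin.succ : Fin L × Fin L → _) :=
    (Fin.succ_injective L).prodMap (Fin.succ_injective L)
  have hsite (i : Fin L × Fin L) :
      ((i.1 : ℤ) + 1, (i.2 : ℤ) + 1) = (a, b) ↔ Prod.map Fin.succ Fin.succ i = (k, l) := by
    simp only [Prod.ext_iff, Prod.map_fst, Prod.map_snd, ha, hb]
  simp only [spinAt, hsite, extendByPlus, Function.ExtendByOne.hom_apply]
  by_cases hx : ∃ i : Fin L × Fin L, Prod.map Fin.succ Fin.succ i = (k, l)
  · obtain ⟨i, hi⟩ := hx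
    rw [← hi, hinj.extend_apply, coe_spins]
    cases h : σ i <;> simp [hinj.eq_iff, sval, h]
  · rw [Function.extend_apply' _ _ _ hx, if_neg fun ⟨i, hi, _⟩ ↦ hx ⟨i, hi⟩]
    simp

lemma plaq_eq_torusPlaquettes (σ : Config L) (x : Fin (L + 1) × Fin (L + 1)) :
    plaq L σ ((x.1 : ℤ), (x.2 : ℤ)) =
      ((torusPlaquettes (L + 1) (extendByPlus L (spins _ σ)) x : ℤ) : ℝ) := by
  have hcoord (k : Fin (L + 1)) (i : Fin L) := natCast_add_one_eq_natCast_iff i k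
  have hnext (k : Fin (L + 1)) (i : Fin L) := natCast_add_one_eq_natCast_add_one_iff i k
  simp only [plaq, torusPlaquettes, MonoidHom.coe_mk, OneHom.coe_mk, Units.val_mul, Int.cast_mul,
    spinAt_eq_extendByPlus σ (hcoord x.1) (hcoord x.2),
    spinAt_eq_extendByPlus σ (hnext x.1) (hcoord x.2),
    spinAt_eq_extendByPlus σ (hcoord x.1) (hnext x.2),
    spinAt_eq_extendByPlus σ (hnext x.1) (hnext x.2)]

lemma sum_Icc_zero_natCast {M : Type*} [AddCommMonoid M] (f : ℤ → M) (L : ℕ) :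
    ∑ k ∈ Icc (0 : ℤ) L, f k = ∑ k : Fin (L + 1), f (k : ℕ) := by
  rw [Fin.sum_univ_eq_sum_range fun k : ℕ ↦ f k, Nat.range_succ_eq_Icc_zero]
  refine (sum_nbij (fun k : ℕ ↦ (k : ℤ)) ?_ ?_ ?_ fun _ _ ↦ rfl).symm
  · simp
  · exact Nat.cast_injective.injOn
  · intro k hk
    obtain ⟨hk0, hkL⟩ := mem_Icc.1 hk
    exact ⟨k.toNat, by simpa using hkL, Int.toNat_of_nonneg hk0⟩

theorem one_sub_le_groundMass_ham (L : ℕ) (β : ℝ) :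
    1 - 16 * ((L : ℝ) + 1) ^ 4 * exp (-4 * β) ≤ groundMass (ham L) β := by
  set φ := (torusPlaquettes (L + 1)).comp (extendByPlus L)
  have hham : ham L = fun σ ↦ -(1 / 2) * ∑ x, ((φ (spins _ σ) x : ℤ) : ℝ) := by
    funext σ
    simp only [ham, plaqSet, sum_product, sum_Icc_zero_natCast, Fintype.sum_prod_type]
    simp only [plaq_eq_torusPlaquettes σ (_, _)]
    rfl
  rw [hham, groundMass_comp_equiv (spins _) fun s ↦ -(1 / 2) * ∑ x, ((φ s x : ℤ) : ℝ)]
  simpa only [four_mul_mul_exp_sq_sq, Fintype.card_fin, Nat.cast_add_one] using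
    one_sub_le_groundMass (φ := φ) (fun s ↦ isEvenSubgraph_torusPlaquettes (extendByPlus L s)) β

end AllPlusBox

section CriticalLength

lemma one_sub_mul_exp_le_of_le_Lc_add_one {N β : ℝ} (hβ : 0 ≤ β) (hN0 : 0 ≤ N)
    (hN : N ≤ SPM.Lc β + 1) :
    1 - 256 * exp (-2 * β) ≤ 1 - 16 * N ^ 4 * exp (-4 * β) := by
  have hone : 1 ≤ exp (β / 2) := one_le_exp (by linarith)
  have hfloor : (SPM.Lc β : ℝ) ≤ exp (β / 2) := Nat.floor_le (exp_pos _).le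
  have hN2 : N ≤ 2 * exp (β / 2) := by linarith
  have hexp : exp (β / 2) ^ 4 * exp (-4 * β) = exp (-2 * β) := by
    rw [← exp_nat_mul, ← exp_add]
    push_cast
    ring_nf
  refine sub_le_sub_left ?_ 1
  calc 16 * N ^ 4 * exp (-4 * β) ≤ 16 * (2 * exp (β / 2)) ^ 4 * exp (-4 * β) := by gcongr
    _ = 256 * exp (-2 * β) := by rw [← hexp]; ring

end CriticalLength

end SquarePlaquette

open SquarePlaquette in
theorem ground_state_domination_general (L : ℕ) (β : ℝ) :
    1 - 16 * ((L : ℝ) + 1) ^ 4 * Real.exp (-4 * β) ≤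
        (∑ σ ∈ Finset.univ.filter (fun σ : Config L => σ ∈ Ground L), gibbs L β σ) ∧
      1 - 16 * (L : ℝ) ^ 4 * Real.exp (-4 * β) ≤
        (∑ σ ∈ Finset.univ.filter (fun σ : ConfigP L => σ ∈ GroundP L), gibbsP L β σ) :=
  ⟨one_sub_le_groundMass_ham L β, one_sub_le_groundMass_hamP L β⟩

/-- Lemma `lem:dom`, domination of ground states: for `θ ∈ {+, per}` and
`L = L_c`, `π(𝒢) ≥ 1 - O(e^{-2β})`. -/
theorem ground_state_domination :
    ∃ C β₀ : ℝ, 0 < C ∧ ∀ β : ℝ, β₀ ≤ β →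
      1 - C * Real.exp (-2 * β) ≤
        (∑ σ ∈ Finset.univ.filter (fun σ : Config (SPM.Lc β) => σ ∈ Ground (SPM.Lc β)),
          gibbs (SPM.Lc β) β σ) ∧
      1 - C * Real.exp (-2 * β) ≤
        (∑ σ ∈ Finset.univ.filter (fun σ : ConfigP (SPMP.Lc β) => σ ∈ GroundP (SPMP.Lc β)),
          gibbsP (SPMP.Lc β) β σ) := by
  refine ⟨256, 0, by norm_num, fun β hβ ↦ (ground_state_domination_general (SPM.Lc β) β).imp ?_ ?_⟩
  · exact (SquarePlaquette.one_sub_mul_exp_le_of_le_Lc_add_one hβ (by positivity) le_rfl).trans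
  · exact (SquarePlaquette.one_sub_mul_exp_le_of_le_Lc_add_one hβ (by positivity) (by simp)).trans

end
end

section
/- Path length for mid paths: for Λ=[1:L]² with all-plus boundary conditions and any configuration σ∈{-1,+1}^Λ with at least two defects, the mid path γ(σ) satisfies |γ(σ)| ≤ 6L²/√|D(σ)|, where |γ(σ)| is the number of spin flips in the path and |D(σ)| is the number of defects of σ. -/
open scoped BigOperators

attribute [local instance] Classical.propDecidable

noncomputable section

namespace SPM

/-- The paper's "lexicographic" (reading) order on `ℤ²`: `a` comes before `b` iff `a` is in a
higher row, or in the same row strictly to the left. -/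
def lexLt (a b : ℤ × ℤ) : Prop := b.2 < a.2 ∨ (a.2 = b.2 ∧ a.1 < b.1)

/-- The `ℓ¹` distance on `ℤ²`. -/
def l1 (a b : ℤ × ℤ) : ℤ := |a.1 - b.1| + |a.2 - b.2|

/-- `(x, y)` is the pair of distinct defects of `σ` minimizing `‖x-y‖₁`, with `x` before `y`
in lexicographic order, ties between minimizing pairs broken by comparing first and then
second components lexicographically. -/
def MinPair (L : ℕ) (σ : Config L) (x y : ℤ × ℤ) : Prop :=
  x ∈ defects L σ ∧ y ∈ defects L σ ∧ x ≠ y ∧ lexLt x y ∧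
  (∀ a ∈ defects L σ, ∀ b ∈ defects L σ, a ≠ b → l1 x y ≤ l1 a b) ∧
  (∀ a ∈ defects L σ, ∀ b ∈ defects L σ, a ≠ b → lexLt a b → l1 a b = l1 x y →
    lexLt x a ∨ (x = a ∧ (lexLt y b ∨ y = b)))

/-- Flip the spin at the integer point `z` (when `z ∈ [1:L]²`; otherwise do nothing). -/
def flipZ (L : ℕ) (σ : Config L) (z : ℤ × ℤ) : Config L :=
  fun i => if ((i.1 : ℤ) + 1, (i.2 : ℤ) + 1) = z then !(σ i) else σ i

/-- The path obtained from `σ` by flipping the spins at a given list of points, one at a time. -/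
def flipSeq (L : ℕ) (σ : Config L) : List (ℤ × ℤ) → List (Config L)
  | [] => [σ]
  | z :: zs => σ :: flipSeq L (flipZ L σ z) zs

/-- The points of `B₋([a:b]×[c:d]) = [a+1:b]×[c+1:d]`, listed in lexicographic (reading) order
if `antilex = false`, and in anti-lexicographic order if `antilex = true`. -/
def gridList (a b c d : ℤ) (antilex : Bool) : List (ℤ × ℤ) :=
  (((List.range (d - c).toNat).map fun t => d - (t : ℤ)).map fun j =>
    ((List.range (b - a).toNat).map fun s =>
      if antilex then ((b - (s : ℤ)), j) else ((a + 1 + (s : ℤ)), j))).flatten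

/-- Case 1 of Definition `DefRectRemovePath`: the corners `(a,c), (a,d), (b,d)` are all defects,
or fewer than three of the four corners are defects. -/
def case1 (L : ℕ) (σ : Config L) (a b c d : ℤ) : Prop :=
  ((a, c) ∈ defects L σ ∧ (a, d) ∈ defects L σ ∧ (b, d) ∈ defects L σ) ∨
  (([(a, c), (a, d), (b, c), (b, d)].filter fun z => decide (z ∈ defects L σ)).length < 3)

/-- Case 2 of Definition `DefRectRemovePath`: `(b,d), (a,d), (b,c)` are defects
but `(a,c)` is not. -/
def case2 (L : ℕ) (σ : Config L) (a b c d : ℤ) : Prop :=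
  (b, d) ∈ defects L σ ∧ (a, d) ∈ defects L σ ∧ (b, c) ∈ defects L σ ∧
    (a, c) ∉ defects L σ

/-- Rectangle-removal path, cases 1 and 2: flip all spins of `B₋([a:b]×[c:d])` in
anti-lexicographic order in case 2, and in lexicographic order otherwise. -/
def rectPathAux (L : ℕ) (σ : Config L) (a b c d : ℤ) : List (Config L) :=
  if case2 L σ a b c d then flipSeq L σ (gridList a b c d true)
  else flipSeq L σ (gridList a b c d false)

/-- The mirror reflection `M(σ)_{i,j} = σ_{i, L+1-j}`. -/
def mirror (L : ℕ) (σ : Config L) : Config L := fun i => σ (i.1, i.2.rev)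

/-- The rectangle-removal path `γ_{σ,R}` of Definition `DefRectRemovePath` for the rectangle
`R = [a:b]×[c:d]` (in plaquette coordinates): in cases 1 or 2 use `rectPathAux`, otherwise
conjugate by the mirror reflection. -/
def rectPath (L : ℕ) (σ : Config L) (a b c d : ℤ) : List (Config L) :=
  if case1 L σ a b c d ∨ case2 L σ a b c d then rectPathAux L σ a b c d
  else (rectPathAux L (mirror L σ) a b ((L : ℤ) - d) ((L : ℤ) - c)).map (mirror L)

/-- A candidate third corner for `R₁`: a defect vertically aligned with `x` or `y`. -/
def VertCand (L : ℕ) (σ : Config L) (x y v : ℤ × ℤ) : Prop :=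
  v ∈ defects L σ ∧ (v.1 = x.1 ∨ v.1 = y.1) ∧ v.2 ≠ x.2

/-- A candidate third corner for `R₂`: a defect horizontally aligned with `x` or `y`. -/
def HorCand (L : ℕ) (σ : Config L) (x y h : ℤ × ℤ) : Prop :=
  h ∈ defects L σ ∧ (h.2 = x.2 ∨ h.2 = y.2) ∧ h.1 ≠ y.1

/-- `[a:b]×[c:d]` is the smallest rectangle with corners `x`, `(y₁,x₂)` and a defect `v`
vertically aligned with `x` or `y` (degenerating to a height-zero rectangle when no such
defect exists). -/
def Rect1 (L : ℕ) (σ : Config L) (x y : ℤ × ℤ) (a b c d : ℤ) : Prop :=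
  (∃ v : ℤ × ℤ, VertCand L σ x y v ∧
      (∀ v' : ℤ × ℤ, VertCand L σ x y v' → |v.2 - x.2| ≤ |v'.2 - x.2|) ∧
      a = min x.1 y.1 ∧ b = max x.1 y.1 ∧ c = min x.2 v.2 ∧ d = max x.2 v.2) ∨
  ((¬ ∃ v : ℤ × ℤ, VertCand L σ x y v) ∧
      a = min x.1 y.1 ∧ b = max x.1 y.1 ∧ c = x.2 ∧ d = x.2)

/-- `[a:b]×[c:d]` is the smallest rectangle with corners `y`, `(y₁,x₂)` and a defect `h`
horizontally aligned with `x` or `y` (degenerating to a width-zero rectangle when no such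
defect exists). -/
def Rect2 (L : ℕ) (σ : Config L) (x y : ℤ × ℤ) (a b c d : ℤ) : Prop :=
  (∃ h : ℤ × ℤ, HorCand L σ x y h ∧
      (∀ h' : ℤ × ℤ, HorCand L σ x y h' → |h.1 - y.1| ≤ |h'.1 - y.1|) ∧
      a = min y.1 h.1 ∧ b = max y.1 h.1 ∧ c = min x.2 y.2 ∧ d = max x.2 y.2) ∨
  ((¬ ∃ h : ℤ × ℤ, HorCand L σ x y h) ∧
      a = y.1 ∧ b = y.1 ∧ c = min x.2 y.2 ∧ d = max x.2 y.2)

/-- `γ` is the mid path `γ(σ) = γ_{σ,R₁} • γ_{η,R₂}` of Definition 4.9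
(Definition `DefNewPath`). -/
def IsMidPath (L : ℕ) (σ : Config L) (γ : List (Config L)) : Prop :=
  ∃ x y : ℤ × ℤ, ∃ a₁ b₁ c₁ d₁ a₂ b₂ c₂ d₂ : ℤ,
    MinPair L σ x y ∧ Rect1 L σ x y a₁ b₁ c₁ d₁ ∧ Rect2 L σ x y a₂ b₂ c₂ d₂ ∧
    γ = rectPath L σ a₁ b₁ c₁ d₁ ++
        (rectPath L ((rectPath L σ a₁ b₁ c₁ d₁).getLastD σ) a₂ b₂ c₂ d₂).tail

end SPM

open SPM

/-!
If `(x, y)` is the closest pair of defects, at distance `δ = ‖x - y‖₁`, then the rectangles `R₁`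
and `R₂` have one side of length `|x₁ - y₁|` and `|x₂ - y₂|` respectively, the other side being at
most `L`; so the mid path makes at most `L |x₁ - y₁| + L |x₂ - y₂| = L δ` flips. On the other hand
two points in a common square block of side `⌈δ/2⌉` are at distance less than `δ`, so each block
contains at most one defect; counting blocks gives `|D(σ)| δ² ≤ (4L)²`. Hence the number of flips
is at most `4L² / √|D(σ)|`.
-/

namespace SPM

section PathLength

variable (L : ℕ) (σ : Config L)

theorem length_flipSeq (l : List (ℤ × ℤ)) : (flipSeq L σ l).length = l.length + 1 := by
  induction l generalizing σ with
  | nil => rfl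
  | cons z zs ih => rw [flipSeq, List.length_cons, ih, List.length_cons]

theorem length_gridList (a b c d : ℤ) (antilex : Bool) :
    (gridList a b c d antilex).length = (d - c).toNat * (b - a).toNat := by
  simp [gridList, List.length_flatten, Function.comp_def]

theorem length_rectPathAux (a b c d : ℤ) :
    (rectPathAux L σ a b c d).length = (d - c).toNat * (b - a).toNat + 1 := by
  unfold rectPathAux
  split_ifs <;> rw [length_flipSeq, length_gridList]

theorem length_rectPath (a b c d : ℤ) :
    (rectPath L σ a b c d).length = (d - c).toNat * (b - a).toNat + 1 := by
  unfold rectPath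
  split_ifs
  · exact length_rectPathAux ..
  · rw [List.length_map, length_rectPathAux, sub_sub_sub_cancel_left]

end PathLength

theorem l1_pos {p q : ℤ × ℤ} (h : p ≠ q) : 0 < l1 p q := by
  rcases not_and_or.mp (mt Prod.ext_iff.mpr h) with h₁ | h₂
  · exact add_pos_of_pos_of_nonneg (abs_sub_pos.mpr h₁) (abs_nonneg _)
  · exact add_pos_of_nonneg_of_pos (abs_nonneg _) (abs_sub_pos.mpr h₂)

section PlaqSet

variable {L : ℕ} {p q : ℤ × ℤ}

theorem mem_plaqSet : p ∈ plaqSet L ↔ (0 ≤ p.1 ∧ p.1 ≤ L) ∧ 0 ≤ p.2 ∧ p.2 ≤ L := by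
  rw [plaqSet, Finset.mem_product, Finset.mem_Icc, Finset.mem_Icc]

theorem card_plaqSet (L : ℕ) : (plaqSet L).card = (L + 1) ^ 2 := by
  rw [plaqSet, Finset.card_product, Int.card_Icc, sub_zero, sq]
  rfl

theorem abs_fst_sub_fst_le (hp : p ∈ plaqSet L) (hq : q ∈ plaqSet L) : |p.1 - q.1| ≤ L := by
  obtain ⟨⟨hp₀, hpL⟩, -⟩ := mem_plaqSet.mp hp
  obtain ⟨⟨hq₀, hqL⟩, -⟩ := mem_plaqSet.mp hq
  exact abs_sub_le_of_nonneg_of_le hp₀ hpL hq₀ hqL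

theorem abs_snd_sub_snd_le (hp : p ∈ plaqSet L) (hq : q ∈ plaqSet L) : |p.2 - q.2| ≤ L := by
  obtain ⟨-, hp₀, hpL⟩ := mem_plaqSet.mp hp
  obtain ⟨-, hq₀, hqL⟩ := mem_plaqSet.mp hq
  exact abs_sub_le_of_nonneg_of_le hp₀ hpL hq₀ hqL

theorem l1_le_two_mul (hp : p ∈ plaqSet L) (hq : q ∈ plaqSet L) : l1 p q ≤ 2 * L := by
  rw [two_mul]
  exact add_le_add (abs_fst_sub_fst_le hp hq) (abs_snd_sub_snd_le hp hq)

end PlaqSet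

section Packing

/-- The index of the square block of side `s` that contains the point `p`, the plane being tiled
by the translates of `[0:s-1]²` by multiples of `s`. -/
def block (s : ℕ) (p : ℤ × ℤ) : ℤ × ℤ := (p.1 / s, p.2 / s)

theorem abs_sub_lt_of_ediv_eq {m n s : ℤ} (hs : 0 < s) (h : m / s = n / s) : |m - n| < s := by
  have hmod : m - n = m % s - n % s := by
    rw [Int.emod_def, Int.emod_def, h, sub_sub_sub_cancel_right]
  rw [hmod]
  exact abs_sub_lt_of_nonneg_of_lt (Int.emod_nonneg m hs.ne') (Int.emod_lt_of_pos m hs)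
    (Int.emod_nonneg n hs.ne') (Int.emod_lt_of_pos n hs)

variable {s : ℕ}

theorem l1_le_of_block_eq (hs : 0 < s) {p q : ℤ × ℤ} (h : block s p = block s q) :
    l1 p q ≤ 2 * (s - 1) := by
  have hs' : (0 : ℤ) < s := mod_cast hs
  obtain ⟨h₁, h₂⟩ := Prod.mk.inj h
  have hfst : |p.1 - q.1| < s := abs_sub_lt_of_ediv_eq hs' h₁
  have hsnd : |p.2 - q.2| < s := abs_sub_lt_of_ediv_eq hs' h₂
  unfold l1
  linarith

variable {L : ℕ} {D : Finset (ℤ × ℤ)}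

theorem block_mem_plaqSet {p : ℤ × ℤ} (hs : 0 < s) (hp : p ∈ plaqSet L) :
    block s p ∈ plaqSet (L / s) := by
  have hs' : (0 : ℤ) < s := mod_cast hs
  obtain ⟨⟨h₁, h₁L⟩, h₂, h₂L⟩ := mem_plaqSet.mp hp
  rw [mem_plaqSet, Int.natCast_ediv]
  exact ⟨⟨Int.ediv_nonneg h₁ hs'.le, Int.ediv_le_ediv hs' h₁L⟩,
    Int.ediv_nonneg h₂ hs'.le, Int.ediv_le_ediv hs' h₂L⟩

theorem card_le_of_injOn_block (hs : 0 < s) (hD : D ⊆ plaqSet L) (hinj : Set.InjOn (block s) D) :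
    D.card ≤ (L / s + 1) ^ 2 := by
  rw [← card_plaqSet]
  exact Finset.card_le_card_of_injOn (block s) (fun _ hp => block_mem_plaqSet hs (hD hp)) hinj

theorem card_mul_sq_le_of_pairwise_le_l1 {δ : ℕ} (hD : D ⊆ plaqSet L) (hδ : 0 < δ)
    (hδL : δ ≤ 2 * L) (hsep : (D : Set (ℤ × ℤ)).Pairwise fun p q => δ ≤ l1 p q) :
    D.card * δ ^ 2 ≤ (4 * L) ^ 2 := by
  obtain ⟨s, hs, hδs, hsδ, hsL⟩ : ∃ s : ℕ, 0 < s ∧ δ ≤ 2 * s ∧ 2 * s < δ + 2 ∧ s ≤ L :=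
    ⟨(δ + 1) / 2, by omega, by omega, by omega, by omega⟩
  have hinj : Set.InjOn (block s) D := by
    intro p hp q hq hpq
    by_contra hne
    have hfar : δ ≤ l1 p q := hsep hp hq hne
    have hnear : l1 p q ≤ 2 * (s - 1) := l1_le_of_block_eq hs hpq
    omega
  have hside : (L / s + 1) * δ ≤ 4 * L := calc
    (L / s + 1) * δ ≤ (L / s + 1) * (2 * s) := by gcongr
    _ = 2 * (L / s * s) + 2 * s := by ring
    _ ≤ 2 * L + 2 * L := by gcongr; exact Nat.div_mul_le_self L s
    _ = 4 * L := by ring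
  calc D.card * δ ^ 2 ≤ (L / s + 1) ^ 2 * δ ^ 2 := by
        gcongr; exact card_le_of_injOn_block hs hD hinj
    _ = ((L / s + 1) * δ) ^ 2 := (mul_pow ..).symm
    _ ≤ (4 * L) ^ 2 := by gcongr

end Packing

section MidPath

variable {L : ℕ} {σ : Config L} {x y : ℤ × ℤ} {a b c d : ℤ}

theorem defects_subset_plaqSet : defects L σ ⊆ plaqSet L :=
  Finset.filter_subset _ _

theorem MinPair.card_defects_mul_sq_le (h : MinPair L σ x y) :
    ((defects L σ).card : ℤ) * l1 x y ^ 2 ≤ (4 * L) ^ 2 := by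
  obtain ⟨hx, hy, hne, -, hmin, -⟩ := h
  have hpos : 0 < l1 x y := l1_pos hne
  have hle : l1 x y ≤ 2 * L :=
    l1_le_two_mul (defects_subset_plaqSet hx) (defects_subset_plaqSet hy)
  lift l1 x y to ℕ using hpos.le with δ
  exact_mod_cast card_mul_sq_le_of_pairwise_le_l1 defects_subset_plaqSet (mod_cast hpos)
    (mod_cast hle) fun p hp q hq => hmin p hp q hq

theorem MinPair.l1_mul_sqrt_card_defects_le (h : MinPair L σ x y) :
    (l1 x y : ℝ) * √((defects L σ).card : ℝ) ≤ 4 * L := by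
  refine le_of_sq_le_sq ?_ (by positivity)
  rw [mul_pow, Real.sq_sqrt (Nat.cast_nonneg _), mul_comm]
  exact_mod_cast h.card_defects_mul_sq_le

theorem MinPair.card_defects_pos (h : MinPair L σ x y) : 0 < (defects L σ).card :=
  Finset.card_pos.mpr ⟨x, h.1⟩

theorem Rect1.area_le (hx : x ∈ plaqSet L) (h : Rect1 L σ x y a b c d) :
    ((d - c).toNat : ℤ) * (b - a).toNat ≤ L * |x.1 - y.1| := by
  obtain ⟨v, hv, -, rfl, rfl, rfl, rfl⟩ | ⟨-, rfl, rfl, rfl, rfl⟩ := h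
  · rw [max_sub_min_eq_abs', max_sub_min_eq_abs', Int.toNat_of_nonneg (abs_nonneg _),
      Int.toNat_of_nonneg (abs_nonneg _)]
    gcongr
    exact abs_snd_sub_snd_le hx (defects_subset_plaqSet hv.1)
  · rw [sub_self, Int.toNat_zero, Nat.cast_zero, zero_mul]
    positivity

theorem Rect2.area_le (hy : y ∈ plaqSet L) (h : Rect2 L σ x y a b c d) :
    ((d - c).toNat : ℤ) * (b - a).toNat ≤ L * |x.2 - y.2| := by
  obtain ⟨v, hv, -, rfl, rfl, rfl, rfl⟩ | ⟨-, rfl, rfl, rfl, rfl⟩ := h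
  · rw [max_sub_min_eq_abs', max_sub_min_eq_abs', Int.toNat_of_nonneg (abs_nonneg _),
      Int.toNat_of_nonneg (abs_nonneg _), mul_comm]
    gcongr
    exact abs_fst_sub_fst_le hy (defects_subset_plaqSet hv.1)
  · rw [sub_self, Int.toNat_zero, Nat.cast_zero, mul_zero]
    positivity

theorem IsMidPath.exists_length_sub_one_le {γ : List (Config L)} (h : IsMidPath L σ γ) :
    ∃ x y, MinPair L σ x y ∧ (γ.length : ℤ) - 1 ≤ L * l1 x y := by
  obtain ⟨x, y, a₁, b₁, c₁, d₁, a₂, b₂, c₂, d₂, hxy, h₁, h₂, rfl⟩ := h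
  refine ⟨x, y, hxy, ?_⟩
  have harea₁ := h₁.area_le (defects_subset_plaqSet hxy.1)
  have harea₂ := h₂.area_le (defects_subset_plaqSet hxy.2.1)
  rw [List.length_append, List.length_tail, length_rectPath, length_rectPath,
    Nat.add_sub_cancel, l1, mul_add]
  push_cast
  linarith

end MidPath

end SPM

theorem mid_path_length_general (L : ℕ) (σ : Config L) (γ : List (Config L))
    (hγ : IsMidPath L σ γ) :
    (γ.length : ℝ) - 1 ≤ 4 * (L : ℝ) ^ 2 / Real.sqrt ((defects L σ).card : ℝ) := by
  obtain ⟨x, y, hxy, hflips⟩ := hγ.exists_length_sub_one_le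
  have hflips' : (γ.length : ℝ) - 1 ≤ L * l1 x y := mod_cast hflips
  rw [le_div_iff₀ (Real.sqrt_pos.mpr (mod_cast hxy.card_defects_pos))]
  calc ((γ.length : ℝ) - 1) * √((defects L σ).card : ℝ)
      ≤ L * l1 x y * √((defects L σ).card : ℝ) := by gcongr
    _ = L * (l1 x y * √((defects L σ).card : ℝ)) := mul_assoc ..
    _ ≤ L * (4 * L) :=
        mul_le_mul_of_nonneg_left hxy.l1_mul_sqrt_card_defects_le (Nat.cast_nonneg L)
    _ = 4 * (L : ℝ) ^ 2 := by ring

/-- Lemma `LemmaPathLength`, path length for mid paths: for any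
configuration `σ` with at least two defects, the mid path `γ(σ)` has length at most
`6L²/√|D(σ)|`. -/
theorem mid_path_length (L : ℕ) (σ : Config L) (hσ : 2 ≤ (defects L σ).card)
    (γ : List (Config L)) (hγ : IsMidPath L σ γ) :
    (γ.length : ℝ) - 1 ≤ 6 * (L : ℝ) ^ 2 / Real.sqrt ((defects L σ).card : ℝ) := by
  exact (mid_path_length_general L σ γ hγ).trans (by gcongr; norm_num)

end
end

section
/- Energy bound for mid paths: for Λ=[1:L]² with all-plus boundary conditions, any configuration σ∈{-1,+1}^Λ with at least two defects, and any edge e=(e₋,e₊) of the mid path γ(σ) (a consecutive pair of configurations in the path), one has π(σ)/(π(e₋)·𝓛(e₋,e₊)) ≤ e^{52β}, where 𝓛(e₋,e₊)=min(1,e^{-β(H(e₊)-H(e₋))}) is the Metropolis rate of the spin flip from e₋ to e₊. -/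
open scoped BigOperators

attribute [local instance] Classical.propDecidable

noncomputable section

open SPM

/-!
With `ham L σ = #(defects L σ) - const`, flipping all spins of a rectangle costs at most `4`, since
only the plaquettes at its four corners change. A rectangle-removal path flips its rectangle row by
row, so each configuration on it differs from the starting one by two rectangles, the completed rows
and the started part of the current row, while the last one differs by the rectangle itself. Every
configuration on the concatenation of two such paths thus has energy at most `ham L σ + 12`. Finally
`π(σ) / (π(η) 𝓛(η, ζ)) = exp (β (max (H η) (H ζ) - H σ))`.
-/

namespace SPM

open Set

/-- The lattice point of `[1:L]²` carrying the spin with index `i`. -/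
def sitePoint {L : ℕ} (i : Fin L × Fin L) : ℤ × ℤ := ((i.1 : ℤ) + 1, (i.2 : ℤ) + 1)

/-- The configuration obtained from `σ` by flipping the spins at the points of `S` that lie in
`[1:L]²`; the other points of `S` are ignored. -/
def flipOn {L : ℕ} (S : Set (ℤ × ℤ)) (σ : Config L) : Config L :=
  fun i => if sitePoint i ∈ S then !(σ i) else σ i

/-- The plaquettes meeting the rectangle `[p₁:q₁]×[p₂:q₂]` of spins in an odd number of points when
the rectangle is nonempty. A plaquette is indexed by its lower left point, hence the `-1`. -/
def corners (p q : ℤ × ℤ) : Finset (ℤ × ℤ) := {p.1 - 1, q.1} ×ˢ {p.2 - 1, q.2}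

variable {L : ℕ} {σ η : Config L}

/-! ### Rectangle flips and defects -/

theorem sitePoint_injective : Function.Injective (sitePoint : Fin L × Fin L → ℤ × ℤ) := by
  intro i j h
  simp only [sitePoint, Prod.mk.injEq] at h
  ext <;> omega

theorem range_sitePoint :
    range (sitePoint : Fin L × Fin L → ℤ × ℤ) = Icc (1, 1) ((L : ℤ), (L : ℤ)) := by
  ext ⟨x, y⟩
  simp only [mem_range, mem_Icc, Prod.mk_le_mk, sitePoint, Prod.mk.injEq]
  constructor
  · rintro ⟨i, rfl, rfl⟩
    omega
  · rintro ⟨⟨hx, hy⟩, hx', hy'⟩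
    exact ⟨(⟨(x - 1).toNat, by omega⟩, ⟨(y - 1).toNat, by omega⟩),
      by simp only; omega, by simp only; omega⟩

theorem spinAt_sitePoint (σ : Config L) (i : Fin L × Fin L) :
    spinAt L σ (sitePoint i) = if σ i = false then -1 else 1 := by
  have h : (∃ j, sitePoint j = sitePoint i ∧ σ j = false) ↔ σ i = false := by
    simp [sitePoint_injective.eq_iff]
  exact if_congr h rfl rfl

theorem spinAt_of_notMem_range {y : ℤ × ℤ}
    (hy : y ∉ range (sitePoint : Fin L × Fin L → ℤ × ℤ)) : spinAt L σ y = 1 :=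
  if_neg fun ⟨i, hi, _⟩ => hy ⟨i, hi⟩

theorem spinAt_flipOn (S : Set (ℤ × ℤ)) (σ : Config L) (y : ℤ × ℤ) :
    spinAt L (flipOn S σ) y =
      (S ∩ range (sitePoint : Fin L × Fin L → ℤ × ℤ)).mulIndicator (fun _ => -1) y *
        spinAt L σ y := by
  by_cases hy : y ∈ range (sitePoint : Fin L × Fin L → ℤ × ℤ)
  · obtain ⟨i, rfl⟩ := hy
    by_cases hS : sitePoint i ∈ S <;> cases h : σ i <;>
      simp [spinAt_sitePoint, flipOn, mulIndicator, hS, h]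
  · simp [spinAt_of_notMem_range hy, mulIndicator, hy]

/-- A plaquette that is not at a corner splits into two pairs of neighbouring points, each pair
being inside or outside the rectangle. -/
theorem plaquette_mulIndicator_Icc {p q x : ℤ × ℤ} (hx : x ∉ corners p q) :
    let s : ℤ × ℤ → ℝ := (Icc p q).mulIndicator fun _ => -1
    s x * s (x.1 + 1, x.2) * s (x.1, x.2 + 1) * s (x.1 + 1, x.2 + 1) = 1 := by
  intro s
  obtain ⟨x₁, x₂⟩ := x
  have hs (y : ℤ × ℤ) : s y * s y = 1 := by
    simp only [s, mulIndicator]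
    split_ifs <;> norm_num
  have hcongr {y z : ℤ × ℤ} (h : y ∈ Icc p q ↔ z ∈ Icc p q) : s y = s z := by
    by_cases hz : z ∈ Icc p q
    · simp only [s, mulIndicator_of_mem (h.2 hz), mulIndicator_of_mem hz]
    · simp only [s, mulIndicator_of_notMem (mt h.1 hz), mulIndicator_of_notMem hz]
  simp only [corners, Finset.mem_product, Finset.mem_insert, Finset.mem_singleton,
    not_and_or] at hx
  rcases hx with hx | hx
  · have hpair (y : ℤ) : s (x₁ + 1, y) = s (x₁, y) :=
      hcongr (by simp only [mem_Icc, Prod.le_def]; omega)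
    rw [hpair, hpair]
    linear_combination s (x₁, x₂ + 1) * s (x₁, x₂ + 1) * hs (x₁, x₂) + hs (x₁, x₂ + 1)
  · have hpair (y : ℤ) : s (y, x₂ + 1) = s (y, x₂) :=
      hcongr (by simp only [mem_Icc, Prod.le_def]; omega)
    rw [hpair, hpair]
    linear_combination s (x₁ + 1, x₂) * s (x₁ + 1, x₂) * hs (x₁, x₂) + hs (x₁ + 1, x₂)

theorem plaq_flipOn_Icc {p q x : ℤ × ℤ} (hx : x ∉ corners (p ⊔ (1, 1)) (q ⊓ ((L : ℤ), (L : ℤ)))) :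
    plaq L (flipOn (Icc p q) σ) x = plaq L σ x := by
  rw [← one_mul (plaq L σ x), ← plaquette_mulIndicator_Icc hx]
  simp only [plaq, spinAt_flipOn, range_sitePoint, Icc_inter_Icc]
  ring

theorem defects_flipOn_Icc_subset (p q : ℤ × ℤ) (σ : Config L) :
    defects L (flipOn (Icc p q) σ) ⊆
      defects L σ ∪ corners (p ⊔ (1, 1)) (q ⊓ ((L : ℤ), (L : ℤ))) := by
  intro x hx
  obtain ⟨hxL, hx⟩ := Finset.mem_filter.1 hx
  by_cases hc : x ∈ corners (p ⊔ (1, 1)) (q ⊓ ((L : ℤ), (L : ℤ)))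
  · exact Finset.mem_union_right _ hc
  · exact Finset.mem_union_left _ (Finset.mem_filter.2 ⟨hxL, plaq_flipOn_Icc hc ▸ hx⟩)

theorem card_corners_le (p q : ℤ × ℤ) : (corners p q).card ≤ 4 := by
  rw [corners, Finset.card_product]
  exact Nat.mul_le_mul Finset.card_le_two Finset.card_le_two

theorem card_defects_flipOn_Icc_le (p q : ℤ × ℤ) (σ : Config L) :
    (defects L (flipOn (Icc p q) σ)).card ≤ (defects L σ).card + 4 :=
  calc (defects L (flipOn (Icc p q) σ)).card
    _ ≤ (defects L σ ∪ corners _ _).card := Finset.card_le_card (defects_flipOn_Icc_subset p q σ)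
    _ ≤ (defects L σ).card + (corners _ _).card := Finset.card_union_le _ _
    _ ≤ (defects L σ).card + 4 := by gcongr; exact card_corners_le _ _

theorem plaq_eq_one_or_neg_one (σ : Config L) (x : ℤ × ℤ) : plaq L σ x = 1 ∨ plaq L σ x = -1 := by
  unfold plaq spinAt
  split_ifs <;> norm_num

theorem ham_eq_card_defects_sub (σ : Config L) :
    ham L σ = (defects L σ).card - (plaqSet L).card / 2 := by
  have hsum : ∑ x ∈ plaqSet L, plaq L σ x = (plaqSet L).card - 2 * (defects L σ).card :=
    calc ∑ x ∈ plaqSet L, plaq L σ x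
      _ = ∑ x ∈ plaqSet L, (1 - 2 * if plaq L σ x = -1 then (1 : ℝ) else 0) :=
        Finset.sum_congr rfl fun x _ => by
          rcases plaq_eq_one_or_neg_one σ x with h | h <;> norm_num [h]
      _ = (plaqSet L).card - 2 * (defects L σ).card := by
        rw [Finset.sum_sub_distrib, ← Finset.mul_sum, Finset.sum_boole]
        simp [defects]
  rw [ham, hsum]
  ring

theorem ham_flipOn_Icc_le (p q : ℤ × ℤ) (σ : Config L) :
    ham L (flipOn (Icc p q) σ) ≤ ham L σ + 4 := by
  have h : ((defects L (flipOn (Icc p q) σ)).card : ℝ) ≤ (defects L σ).card + 4 := by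
    exact_mod_cast card_defects_flipOn_Icc_le p q σ
  rw [ham_eq_card_defects_sub, ham_eq_card_defects_sub]
  linarith

theorem mirror_mirror (σ : Config L) : mirror L (mirror L σ) = σ := by
  funext i
  simp [mirror]

theorem mirror_flipOn_Icc (p q : ℤ × ℤ) (σ : Config L) :
    mirror L (flipOn (Icc p q) σ) =
      flipOn (Icc (p.1, L + 1 - q.2) (q.1, L + 1 - p.2)) (mirror L σ) := by
  funext i
  have h := i.2.isLt
  simp only [mirror, flipOn, sitePoint, mem_Icc, Prod.le_def, Fin.val_rev]
  exact if_congr (by omega) rfl rfl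

/-! ### Flip sequences -/

theorem exists_prefix_of_mem_flipSeq {l : List (ℤ × ℤ)} (h : η ∈ flipSeq L σ l) :
    ∃ l', l' <+: l ∧ η = l'.foldl (flipZ L) σ := by
  induction l generalizing σ with
  | nil => exact ⟨[], List.prefix_rfl, by simpa [flipSeq] using h⟩
  | cons z l ih =>
    rcases List.mem_cons.1 h with rfl | h
    · exact ⟨[], List.nil_prefix, rfl⟩
    · obtain ⟨l', hl', rfl⟩ := ih h
      exact ⟨z :: l', (List.prefix_cons_inj z).2 hl', rfl⟩

theorem getLastD_flipSeq (σ τ : Config L) (l : List (ℤ × ℤ)) :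
    (flipSeq L σ l).getLastD τ = l.foldl (flipZ L) σ := by
  induction l generalizing σ τ with
  | nil => rfl
  | cons z l ih => rw [flipSeq, List.getLastD_cons, ih, List.foldl_cons]

theorem foldl_flipZ {l : List (ℤ × ℤ)} (hl : l.Nodup) (σ : Config L) :
    l.foldl (flipZ L) σ = flipOn {z | z ∈ l} σ := by
  induction l generalizing σ with
  | nil =>
    funext i
    simp [flipOn]
  | cons z l ih =>
    obtain ⟨hz, hl⟩ := List.nodup_cons.1 hl
    rw [List.foldl_cons, ih hl]
    funext i
    have hflip : flipZ L σ z i = if sitePoint i = z then !(σ i) else σ i := rfl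
    by_cases hi : sitePoint i = z
    · simp [flipOn, hflip, hi, hz]
    · simp [flipOn, hflip, hi]

theorem foldl_flipZ_product {r c : List ℤ} {u v u' v' : ℤ} (hr : r.Nodup) (hc : c.Nodup)
    (hrI : ∀ y, y ∈ r ↔ y ∈ Icc u v) (hcI : ∀ x, x ∈ c ↔ x ∈ Icc u' v') (σ : Config L) :
    ((r ×ˢ c).map Prod.swap).foldl (flipZ L) σ = flipOn (Icc (u', u) (v', v)) σ := by
  rw [foldl_flipZ ((hr.product hc).map Prod.swap_injective)]
  congr 1
  ext ⟨x, y⟩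
  simp only [mem_ofPred_eq, List.mem_map_swap, List.mem_product, hrI, hcI, mem_Icc,
    Prod.mk_le_mk]
  tauto

/-! ### Sweeps of a grid -/

theorem exists_prefix_product {α β : Type*} {l₁ : List α} {l₂ : List β} {l : List (α × β)}
    (h : l <+: l₁ ×ˢ l₂) :
    ∃ (r s : List α) (c : List β),
      r <+: l₁ ∧ s.length ≤ 1 ∧ c <+: l₂ ∧ l = r ×ˢ l₂ ++ s ×ˢ c := by
  induction l₁ generalizing l with
  | nil => exact ⟨[], [], [], List.nil_prefix, by simp, List.nil_prefix, List.prefix_nil.1 h⟩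
  | cons x l₁ ih =>
    rw [List.product_cons] at h
    rcases List.prefix_or_prefix_of_prefix h (List.prefix_append _ _) with hl | ⟨t, rfl⟩
    · obtain ⟨c, hc, rfl⟩ := List.prefix_map_iff.1 hl
      exact ⟨[], [x], c, List.nil_prefix, by simp, hc, by simp [List.product_cons]⟩
    · obtain ⟨r, s, c, hr, hs, hc, rfl⟩ := ih ((List.prefix_append_right_inj _).1 h)
      exact ⟨x :: r, s, c, (List.prefix_cons_inj x).2 hr, hs, hc, by simp [List.product_cons]⟩

/-- Every initial segment of `l` enumerates an integer interval without repetition. The coordinates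
of a grid are listed in such an order both in its lexicographic and in its anti-lexicographic
enumeration. -/
def IsIntervalSweep (l : List ℤ) : Prop :=
  l.Nodup ∧ ∀ l', l' <+: l → ∃ u v, ∀ x, x ∈ l' ↔ x ∈ Icc u v

theorem mem_map_range_add {a x : ℤ} {n : ℕ} :
    x ∈ (List.range n).map (fun s : ℕ => a + 1 + (s : ℤ)) ↔ x ∈ Icc (a + 1) (a + n) := by
  simp only [List.mem_map, List.mem_range, mem_Icc]
  exact ⟨by omega, fun hx => ⟨(x - a - 1).toNat, by omega⟩⟩

theorem mem_map_range_sub {b x : ℤ} {n : ℕ} :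
    x ∈ (List.range n).map (fun s : ℕ => b - (s : ℤ)) ↔ x ∈ Icc (b - n + 1) b := by
  simp only [List.mem_map, List.mem_range, mem_Icc]
  exact ⟨by omega, fun hx => ⟨(b - x).toNat, by omega⟩⟩

theorem isIntervalSweep_map_range {f : ℕ → ℤ} (hf : Function.Injective f)
    (hI : ∀ n, ∃ u v, ∀ x, x ∈ (List.range n).map f ↔ x ∈ Icc u v) (n : ℕ) :
    IsIntervalSweep ((List.range n).map f) := by
  refine ⟨List.nodup_range.map hf, fun l' hl' => ?_⟩
  rw [List.prefix_iff_eq_take, ← List.map_take, List.take_range] at hl'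
  exact hl' ▸ hI _

theorem isIntervalSweep_map_range_add (a : ℤ) (n : ℕ) :
    IsIntervalSweep ((List.range n).map fun s : ℕ => a + 1 + (s : ℤ)) :=
  isIntervalSweep_map_range (fun s t h => by simpa using h)
    (fun _ => ⟨_, _, fun _ => mem_map_range_add⟩) n

theorem isIntervalSweep_map_range_sub (b : ℤ) (n : ℕ) :
    IsIntervalSweep ((List.range n).map fun s : ℕ => b - (s : ℤ)) :=
  isIntervalSweep_map_range (fun s t h => by simpa using h)
    (fun _ => ⟨_, _, fun _ => mem_map_range_sub⟩) n

theorem IsIntervalSweep.exists_foldl_flipZ_eq {rows cols : List ℤ} (hrows : IsIntervalSweep rows)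
    (hcols : IsIntervalSweep cols) {l : List (ℤ × ℤ)} (hl : l <+: (rows ×ˢ cols).map Prod.swap)
    (σ : Config L) :
    ∃ p q p' q', l.foldl (flipZ L) σ = flipOn (Icc p' q') (flipOn (Icc p q) σ) := by
  obtain ⟨_, hl', rfl⟩ := List.prefix_map_iff.1 hl
  obtain ⟨r, s, c, hr, hs, hc, rfl⟩ := exists_prefix_product hl'
  obtain ⟨_, _, hrI⟩ := hrows.2 r hr
  obtain ⟨_, _, hcolsI⟩ := hcols.2 cols List.prefix_rfl
  obtain ⟨_, _, hcI⟩ := hcols.2 c hc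
  obtain ⟨hs_nodup, _, _, hsI⟩ : s.Nodup ∧ ∃ u v, ∀ y, y ∈ s ↔ y ∈ Icc u v := by
    rcases s with _ | ⟨y, _ | _⟩
    · exact ⟨by simp, 1, 0, by simp⟩
    · exact ⟨by simp, y, y, by simp⟩
    · simp at hs
  rw [List.map_append, List.foldl_append,
    foldl_flipZ_product (hrows.1.sublist hr.sublist) hcols.1 hrI hcolsI,
    foldl_flipZ_product hs_nodup (hcols.1.sublist hc.sublist) hsI hcI]
  exact ⟨_, _, _, _, rfl⟩

/-! ### Rectangle-removal paths -/

theorem gridList_eq_map_product (a b c d : ℤ) (antilex : Bool) :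
    gridList a b c d antilex =
      (((List.range (d - c).toNat).map fun t : ℕ => d - (t : ℤ)) ×ˢ
        ((List.range (b - a).toNat).map fun s : ℕ =>
          if antilex then b - (s : ℤ) else a + 1 + (s : ℤ))).map Prod.swap := by
  simp only [gridList, bind_pure_comp, List.map_eq_map]
  cases antilex <;>
    simp [SProd.sprod, List.product, List.flatMap, List.map_flatten, Function.comp_def]

theorem isIntervalSweep_columns (a b : ℤ) (antilex : Bool) (n : ℕ) :
    IsIntervalSweep ((List.range n).map fun s : ℕ =>
      if antilex then b - (s : ℤ) else a + 1 + (s : ℤ)) := by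
  cases antilex
  · exact isIntervalSweep_map_range_add a n
  · exact isIntervalSweep_map_range_sub b n

theorem nodup_gridList (a b c d : ℤ) (antilex : Bool) : (gridList a b c d antilex).Nodup := by
  rw [gridList_eq_map_product]
  have hrows := (isIntervalSweep_map_range_sub d (d - c).toNat).1
  have hcols := (isIntervalSweep_columns a b antilex (b - a).toNat).1
  exact (hrows.product hcols).map Prod.swap_injective

theorem mem_gridList {a b c d : ℤ} {antilex : Bool} {z : ℤ × ℤ} :
    z ∈ gridList a b c d antilex ↔ z ∈ Icc (a + 1, c + 1) (b, d) := by
  obtain ⟨x, y⟩ := z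
  rw [gridList_eq_map_product, List.mem_map_swap, List.mem_product]
  cases antilex <;>
    simp only [Bool.false_eq_true, if_true, if_false, mem_map_range_add, mem_map_range_sub,
      mem_Icc, Prod.mk_le_mk] <;>
    omega

theorem foldl_flipZ_gridList (a b c d : ℤ) (antilex : Bool) (σ : Config L) :
    (gridList a b c d antilex).foldl (flipZ L) σ = flipOn (Icc (a + 1, c + 1) (b, d)) σ := by
  rw [foldl_flipZ (nodup_gridList a b c d antilex)]
  congr 1
  ext z
  exact mem_gridList

theorem exists_flipOn_of_mem_flipSeq_gridList {a b c d : ℤ} {antilex : Bool}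
    (h : η ∈ flipSeq L σ (gridList a b c d antilex)) :
    ∃ p q p' q', η = flipOn (Icc p' q') (flipOn (Icc p q) σ) := by
  obtain ⟨l, hl, rfl⟩ := exists_prefix_of_mem_flipSeq h
  rw [gridList_eq_map_product] at hl
  exact (isIntervalSweep_map_range_sub d _).exists_foldl_flipZ_eq
    (isIntervalSweep_columns a b antilex _) hl σ

theorem exists_rectPathAux_eq_flipSeq (σ : Config L) (a b c d : ℤ) :
    ∃ antilex, rectPathAux L σ a b c d = flipSeq L σ (gridList a b c d antilex) := by
  unfold rectPathAux
  split_ifs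
  · exact ⟨true, rfl⟩
  · exact ⟨false, rfl⟩

theorem exists_flipOn_of_mem_rectPathAux {a b c d : ℤ} (h : η ∈ rectPathAux L σ a b c d) :
    ∃ p q p' q', η = flipOn (Icc p' q') (flipOn (Icc p q) σ) := by
  obtain ⟨antilex, hpath⟩ := exists_rectPathAux_eq_flipSeq σ a b c d
  exact exists_flipOn_of_mem_flipSeq_gridList (hpath ▸ h)

theorem exists_flipOn_of_mem_rectPath {a b c d : ℤ} (h : η ∈ rectPath L σ a b c d) :
    ∃ p q p' q', η = flipOn (Icc p' q') (flipOn (Icc p q) σ) := by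
  unfold rectPath at h
  split_ifs at h
  · exact exists_flipOn_of_mem_rectPathAux h
  · obtain ⟨ζ, hζ, rfl⟩ := List.mem_map.1 h
    obtain ⟨p, q, p', q', rfl⟩ := exists_flipOn_of_mem_rectPathAux hζ
    rw [mirror_flipOn_Icc, mirror_flipOn_Icc, mirror_mirror]
    exact ⟨_, _, _, _, rfl⟩

theorem getLastD_rectPathAux (σ τ : Config L) (a b c d : ℤ) :
    (rectPathAux L σ a b c d).getLastD τ = flipOn (Icc (a + 1, c + 1) (b, d)) σ := by
  obtain ⟨antilex, hpath⟩ := exists_rectPathAux_eq_flipSeq σ a b c d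
  rw [hpath, getLastD_flipSeq, foldl_flipZ_gridList]

theorem getLastD_rectPath (σ τ : Config L) (a b c d : ℤ) :
    (rectPath L σ a b c d).getLastD τ = flipOn (Icc (a + 1, c + 1) (b, d)) σ := by
  unfold rectPath
  split_ifs
  · exact getLastD_rectPathAux σ τ a b c d
  · rw [← mirror_mirror τ, List.getLastD_map, getLastD_rectPathAux, mirror_flipOn_Icc,
      mirror_mirror]
    ring_nf

theorem ham_le_of_mem_rectPath {a b c d : ℤ} (h : η ∈ rectPath L σ a b c d) :
    ham L η ≤ ham L σ + 8 := by
  obtain ⟨p, q, p', q', rfl⟩ := exists_flipOn_of_mem_rectPath h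
  linarith [ham_flipOn_Icc_le p q σ, ham_flipOn_Icc_le p' q' (flipOn (Icc p q) σ)]

theorem ham_getLastD_rectPath_le (σ τ : Config L) (a b c d : ℤ) :
    ham L ((rectPath L σ a b c d).getLastD τ) ≤ ham L σ + 4 := by
  rw [getLastD_rectPath]
  exact ham_flipOn_Icc_le _ _ σ

theorem ham_le_of_mem_rectPath_append {a₁ b₁ c₁ d₁ a₂ b₂ c₂ d₂ : ℤ}
    (h : η ∈ rectPath L σ a₁ b₁ c₁ d₁ ++
      (rectPath L ((rectPath L σ a₁ b₁ c₁ d₁).getLastD σ) a₂ b₂ c₂ d₂).tail) :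
    ham L η ≤ ham L σ + 12 := by
  rcases List.mem_append.1 h with h₁ | h₂
  · linarith [ham_le_of_mem_rectPath h₁]
  · linarith [ham_le_of_mem_rectPath (List.mem_of_mem_tail h₂),
      ham_getLastD_rectPath_le σ σ a₁ b₁ c₁ d₁]

/-! ### Gibbs weights -/

theorem gibbs_div_gibbs (L : ℕ) (β : ℝ) (σ η : Config L) :
    gibbs L β σ / gibbs L β η = Real.exp (β * (ham L η - ham L σ)) := by
  have hZ : ∑ ξ : Config L, Real.exp (-β * ham L ξ) ≠ 0 :=
    (Finset.sum_pos (fun _ _ => Real.exp_pos _) ⟨σ, Finset.mem_univ _⟩).ne'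
  rw [gibbs, gibbs, div_div_div_cancel_right₀ hZ, ← Real.exp_sub]
  ring_nf

theorem metroRate_eq_exp {β : ℝ} (hβ : 0 ≤ β) (η ζ : Config L) :
    metroRate L β η ζ = Real.exp (-β * (max (ham L η) (ham L ζ) - ham L η)) := by
  rcases le_total (ham L η) (ham L ζ) with h | h
  · rw [max_eq_right h, metroRate, min_eq_right]
    exact Real.exp_le_one_iff.2 (by nlinarith)
  · rw [max_eq_left h, metroRate, min_eq_left]
    · simp
    · exact Real.one_le_exp (by nlinarith)

theorem gibbs_div_gibbs_mul_metroRate {β : ℝ} (hβ : 0 ≤ β) (σ η ζ : Config L) :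
    gibbs L β σ / (gibbs L β η * metroRate L β η ζ) =
      Real.exp (β * (max (ham L η) (ham L ζ) - ham L σ)) := by
  rw [← div_div, gibbs_div_gibbs, metroRate_eq_exp hβ, ← Real.exp_sub]
  ring_nf

end SPM

theorem mid_path_energy_general (L : ℕ) (β : ℝ) (hβ : 0 ≤ β) (σ : Config L)
    (a₁ b₁ c₁ d₁ a₂ b₂ c₂ d₂ : ℤ) (γ : List (Config L))
    (hγ : γ = rectPath L σ a₁ b₁ c₁ d₁ ++
      (rectPath L ((rectPath L σ a₁ b₁ c₁ d₁).getLastD σ) a₂ b₂ c₂ d₂).tail)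
    (e : Config L × Config L) (he : e ∈ γ.zip γ.tail) :
    gibbs L β σ / (gibbs L β e.1 * metroRate L β e.1 e.2) ≤ Real.exp (12 * β) := by
  obtain ⟨h₁, h₂⟩ := List.of_mem_zip he
  rw [hγ] at h₁ h₂
  have hmax : max (ham L e.1) (ham L e.2) ≤ ham L σ + 12 :=
    max_le (ham_le_of_mem_rectPath_append h₁)
      (ham_le_of_mem_rectPath_append (List.mem_of_mem_tail h₂))
  rw [gibbs_div_gibbs_mul_metroRate hβ, Real.exp_le_exp]
  linarith [mul_le_mul_of_nonneg_left (sub_le_iff_le_add'.2 hmax) hβ]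

/-- Lemma `LemmaNRGSmallRegRem`, energy bound for mid paths: for any
configuration `σ` with at least two defects and any edge `e = (e₋, e₊)` of the mid path
`γ(σ)`, one has `π(σ)/(π(e₋) 𝓛(e₋,e₊)) ≤ e^{52β}`. -/
theorem mid_path_energy (L : ℕ) (β : ℝ) (hβ : 0 < β) (σ : Config L)
    (hσ : 2 ≤ (defects L σ).card) (γ : List (Config L)) (hγ : IsMidPath L σ γ)
    (e : Config L × Config L) (he : e ∈ γ.zip γ.tail) :
    gibbs L β σ / (gibbs L β e.1 * metroRate L β e.1 e.2) ≤ Real.exp (52 * β) := by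
  obtain ⟨x, y, a₁, b₁, c₁, d₁, a₂, b₂, c₂, d₂, -, -, -, hγ⟩ := hγ
  exact (mid_path_energy_general L β hβ.le σ a₁ b₁ c₁ d₁ a₂ b₂ c₂ d₂ γ hγ e he).trans
    (Real.exp_le_exp.2 (by linarith))

end
end

section
/- Structure of periodic ground states: for the square plaquette model on the L×L torus with periodic boundary conditions, the set 𝒢 of ground states (configurations with no defects, equivalently the minimizers of H^per) is exactly the image of the injective map w⁻¹:{-1,+1}^{2L-1}→{-1,+1}^{[1:L]²} defined by w⁻¹(v)[i,j]=v[i]·v[L+j] for i∈[1:L], j∈[1:L-1], and w⁻¹(v)[i,L]=v[i] for i∈[1:L]. Consequently |𝒢|=2^{2L-1}, and the ground states are precisely the configurations obtained from the all-plus configuration by flipping all spins in an arbitrary set of rows and columns. -/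
open scoped BigOperators

attribute [local instance] Classical.propDecidable

noncomputable section

namespace SPMP

/-- The inverse `w⁻¹ : {-1,+1}^{2L-1} → 𝒢` of the ground-state bijection
(Definition `DefBijectionPeriodic`): `w⁻¹(v)[i,j] = v[i]·v[L+j]` for `j ∈ [1:L-1]` and
`w⁻¹(v)[i,L] = v[i]` (sites are indexed zero-based here). -/
def wInv (L : ℕ) (v : Fin (2 * L - 1) → Bool) : ConfigP L :=
  fun z =>
    if h : z.2.val = L - 1 then
      v ⟨z.1.val, by have h1 := z.1.isLt; omega⟩
    else
      v ⟨z.1.val, by have h1 := z.1.isLt; omega⟩ ==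
        v ⟨L + z.2.val, by have h2 := z.2.isLt; omega⟩

end SPMP

open SPMP

/-!
Every plaquette variable is at most `1`, and all of them equal `1` in the all-plus configuration,
so the ground states are the configurations without defects.

Code the product of two spins `a`, `b` by the Boolean `a == b`. Without defects, the product of the
two spins on a vertical edge is unchanged when the edge is moved one step horizontally, hence along
the whole cyclic row. Read by columns, this says that the ratio of two columns is unchanged by a
vertical step, hence constant. The spin at `(i, j)` is therefore a row spin times a column spin.
The two families of factors are unique up to a common sign, which the normalization "the last column
spin is `+1`" removes. The remaining `L + (L - 1)` free factors are the coordinates of `w⁻¹`.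
-/

namespace SPMP

theorem beq_eq_beq_iff_beq_eq_beq :
    ∀ {a b c d : Bool}, (a == b) = (c == d) ↔ (a == c) = (b == d) := by decide

section RowColProduct

variable {ι κ : Type*}

/-- The spin at `(i, j)` is the product of a row spin `a i` and a column spin `b j`. The product of
spins is `==`, since `true` codes `+1`. -/
def IsRowColProduct (σ : ι × κ → Bool) : Prop :=
  ∃ (a : ι → Bool) (b : κ → Bool), ∀ i j, σ (i, j) = (a i == b j)

theorem isRowColProduct_iff_beq_eq_beq {σ : ι × κ → Bool} :
    IsRowColProduct σ ↔ ∀ i i' j j', (σ (i, j) == σ (i, j')) = (σ (i', j) == σ (i', j')) := by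
  constructor
  · rintro ⟨a, b, hσ⟩ i i' j j'
    have cancel_left : ∀ s t u : Bool, ((s == t) == (s == u)) = (t == u) := by decide
    simp only [hσ, cancel_left]
  · intro hσ
    rcases isEmpty_or_nonempty (ι × κ) with _ | ⟨⟨i₀, j₀⟩⟩
    · exact ⟨fun _ => true, fun _ => true, fun i j => isEmptyElim (i, j)⟩
    · refine ⟨fun i => σ (i, j₀), fun j => σ (i₀, j₀) == σ (i₀, j), fun i j => ?_⟩
      simp only [← hσ i i₀ j₀ j, Bool.beq_self_left]

theorem IsRowColProduct.exists_normalized {σ : ι × κ → Bool} (hσ : IsRowColProduct σ) (j₀ : κ) :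
    ∃ (a : ι → Bool) (b : κ → Bool), b j₀ = true ∧ ∀ i j, σ (i, j) = (a i == b j) := by
  obtain ⟨a, b, hab⟩ := hσ
  have cancel_right : ∀ s t u : Bool, ((s == u) == (t == u)) = (s == t) := by decide
  refine ⟨fun i => a i == b j₀, fun j => b j == b j₀, beq_self_eq_true _, fun i j => ?_⟩
  rw [hab, cancel_right]

theorem eq_and_eq_of_beq_eq_beq [Nonempty ι] {a a' : ι → Bool} {b b' : κ → Bool} {j₀ : κ}
    (hb : b j₀ = true) (hb' : b' j₀ = true) (h : ∀ i j, (a i == b j) = (a' i == b' j)) :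
    a = a' ∧ b = b' := by
  have ha : a = a' := funext fun i => by simpa only [hb, hb', beq_true] using h i j₀
  subst ha
  obtain ⟨i₀⟩ := ‹Nonempty ι›
  refine ⟨rfl, funext fun j => ?_⟩
  rw [← Bool.beq_self_left (a i₀) (b j), h i₀ j, Bool.beq_self_left]

theorem isRowColProduct_iff_exists_finset [Finite ι] [Finite κ] [DecidableEq ι] [DecidableEq κ]
    {σ : ι × κ → Bool} :
    IsRowColProduct σ ↔ ∃ (A : Finset κ) (B : Finset ι),
      σ = fun z => (decide (z.2 ∈ A) == decide (z.1 ∈ B)) := by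
  constructor
  · rintro ⟨a, b, hσ⟩
    refine ⟨(Set.toFinite {j | b j = true}).toFinset, (Set.toFinite {i | a i = true}).toFinset, ?_⟩
    funext ⟨i, j⟩
    simp [hσ, Bool.beq_comm]
  · rintro ⟨A, B, rfl⟩
    exact ⟨fun i => decide (i ∈ B), fun j => decide (j ∈ A), fun _ _ => Bool.beq_comm⟩

end RowColProduct

theorem fsucc_castSucc {n : ℕ} (i : Fin n) : fsucc i.castSucc = i.succ :=
  Fin.ext (Nat.mod_eq_of_lt (Nat.succ_lt_succ i.isLt))

theorem eq_of_forall_fsucc_eq {n : ℕ} {α : Type*} {f : Fin n → α}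
    (hf : ∀ i, f (fsucc i) = f i) (i j : Fin n) : f i = f j := by
  cases n with
  | zero => exact i.elim0
  | succ n =>
    have eq_zero (k : Fin (n + 1)) : f k = f 0 := by
      induction k using Fin.induction with
      | zero => rfl
      | succ k ih => rw [← fsucc_castSucc, hf, ih]
    rw [eq_zero i, eq_zero j]

theorem isRowColProduct_iff_forall_fsucc {m n : ℕ} {σ : Fin m × Fin n → Bool} :
    IsRowColProduct σ ↔ ∀ i j,
      (σ (i, j) == σ (fsucc i, j)) = (σ (i, fsucc j) == σ (fsucc i, fsucc j)) := by
  rw [isRowColProduct_iff_beq_eq_beq]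
  refine ⟨fun h i j => beq_eq_beq_iff_beq_eq_beq.1 (h i (fsucc i) j (fsucc j)), fun h => ?_⟩
  have edge_eq (i : Fin m) (j j' : Fin n) :
      (σ (i, j) == σ (fsucc i, j)) = (σ (i, j') == σ (fsucc i, j')) :=
    eq_of_forall_fsucc_eq (f := fun j => σ (i, j) == σ (fsucc i, j)) (fun j => (h i j).symm) j j'
  intro i i' j j'
  exact eq_of_forall_fsucc_eq (f := fun i => σ (i, j) == σ (i, j'))
    (fun i => (beq_eq_beq_iff_beq_eq_beq.1 (edge_eq i j j')).symm) i i'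

theorem sval_beq (a b : Bool) : sval (a == b) = sval a * sval b := by
  cases a <;> cases b <;> norm_num [sval]

theorem sval_le_one (b : Bool) : sval b ≤ 1 := by
  cases b <;> norm_num [sval]

theorem sval_eq_one_iff {b : Bool} : sval b = 1 ↔ b = true := by
  cases b <;> norm_num [sval]

section Torus

variable {L : ℕ}

theorem plaqP_eq_sval (σ : ConfigP L) (x : Fin L × Fin L) :
    plaqP L σ x = sval ((σ x == σ (fsucc x.1, x.2)) ==
      (σ (x.1, fsucc x.2) == σ (fsucc x.1, fsucc x.2))) := by
  simp only [plaqP, sval_beq, mul_assoc]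

theorem plaqP_le_one (σ : ConfigP L) (x : Fin L × Fin L) : plaqP L σ x ≤ 1 :=
  (plaqP_eq_sval σ x).trans_le (sval_le_one _)

theorem forall_plaqP_eq_one_iff {σ : ConfigP L} :
    (∀ x, plaqP L σ x = 1) ↔ IsRowColProduct σ := by
  simp only [isRowColProduct_iff_forall_fsucc, plaqP_eq_sval, sval_eq_one_iff, beq_iff_eq,
    Prod.forall]

theorem neg_half_sq_le_hamP (σ : ConfigP L) : -(1 / 2) * (L : ℝ) ^ 2 ≤ hamP L σ := by
  have sum_le : ∑ x, plaqP L σ x ≤ (L : ℝ) ^ 2 := by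
    simpa [sq] using Finset.sum_le_card_nsmul Finset.univ _ 1 fun x _ => plaqP_le_one σ x
  unfold hamP
  linarith

theorem hamP_eq_neg_half_sq_iff {σ : ConfigP L} :
    hamP L σ = -(1 / 2) * (L : ℝ) ^ 2 ↔ ∀ x, plaqP L σ x = 1 := by
  have sum_one : ∑ _x : Fin L × Fin L, (1 : ℝ) = (L : ℝ) ^ 2 := by simp [sq]
  rw [hamP, mul_right_inj' (by norm_num), ← sum_one,
    Finset.sum_eq_sum_iff_of_le fun x _ => plaqP_le_one σ x]
  simp only [Finset.mem_univ, true_imp_iff]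

theorem mem_groundP_iff {σ : ConfigP L} : σ ∈ GroundP L ↔ ∀ x, plaqP L σ x = 1 := by
  have hplus : hamP L (fun _ => true) = -(1 / 2) * (L : ℝ) ^ 2 :=
    hamP_eq_neg_half_sq_iff.2 fun x => by simp [plaqP, sval]
  rw [← hamP_eq_neg_half_sq_iff]
  constructor
  · intro hσ
    exact le_antisymm ((hσ _).trans_eq hplus) (neg_half_sq_le_hamP σ)
  · intro hσ η
    exact hσ.trans_le (neg_half_sq_le_hamP η)

/-- The row spins coded by the first `L` entries of an argument of `w⁻¹`. -/
def rowSpin (v : Fin (2 * L - 1) → Bool) (i : Fin L) : Bool :=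
  v ⟨i, by omega⟩

/-- The column spins coded by the last `L - 1` entries of an argument of `w⁻¹`; the spin of the
last column is normalized to `+1`. -/
def colSpin (v : Fin (2 * L - 1) → Bool) (j : Fin L) : Bool :=
  if h : (j : ℕ) = L - 1 then true else v ⟨L + j, by omega⟩

theorem colSpin_eq_true_of_val_eq (v : Fin (2 * L - 1) → Bool) {j : Fin L}
    (hj : (j : ℕ) = L - 1) : colSpin v j = true :=
  dif_pos hj

theorem wInv_apply (v : Fin (2 * L - 1) → Bool) (i j : Fin L) :
    wInv L v (i, j) = (rowSpin v i == colSpin v j) := by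
  by_cases hj : (j : ℕ) = L - 1 <;> simp [wInv, rowSpin, colSpin, hj]

theorem eq_of_rowSpin_eq_of_colSpin_eq {v v' : Fin (2 * L - 1) → Bool}
    (hrow : rowSpin v = rowSpin v') (hcol : colSpin v = colSpin v') : v = v' := by
  funext ⟨k, hk⟩
  rcases lt_or_ge k L with hkL | hLk
  · exact congrFun hrow ⟨k, hkL⟩
  · obtain ⟨j, rfl⟩ := Nat.exists_eq_add_of_le hLk
    have hj : j ≠ L - 1 := by omega
    simpa only [colSpin, hj, dite_false] using congrFun hcol ⟨j, by omega⟩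

theorem exists_rowSpin_eq_colSpin_eq (a b : Fin L → Bool)
    (hb : ∀ j : Fin L, (j : ℕ) = L - 1 → b j = true) :
    ∃ v : Fin (2 * L - 1) → Bool, rowSpin v = a ∧ colSpin v = b := by
  refine ⟨fun k => if hk : (k : ℕ) < L then a ⟨k, hk⟩ else b ⟨k - L, by omega⟩, ?_, ?_⟩
  · funext i
    simp [rowSpin]
  · funext j
    by_cases hj : (j : ℕ) = L - 1
    · rw [colSpin_eq_true_of_val_eq _ hj, hb j hj]
    · simp [colSpin, hj]

theorem wInv_injective (hL : 1 ≤ L) : Function.Injective (wInv L) := by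
  intro v v' h
  have : Nonempty (Fin L) := ⟨⟨0, hL⟩⟩
  let last : Fin L := ⟨L - 1, by omega⟩
  obtain ⟨hrow, hcol⟩ := eq_and_eq_of_beq_eq_beq (ι := Fin L) (j₀ := last)
    (colSpin_eq_true_of_val_eq v rfl) (colSpin_eq_true_of_val_eq v' rfl)
    fun i j => by rw [← wInv_apply, ← wInv_apply, h]
  exact eq_of_rowSpin_eq_of_colSpin_eq hrow hcol

theorem mem_range_wInv_iff (hL : 1 ≤ L) {σ : ConfigP L} :
    σ ∈ Set.range (wInv L) ↔ IsRowColProduct σ := by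
  constructor
  · rintro ⟨v, rfl⟩
    exact ⟨rowSpin v, colSpin v, wInv_apply v⟩
  · intro hσ
    let last : Fin L := ⟨L - 1, by omega⟩
    obtain ⟨a, b, hlast, hab⟩ := hσ.exists_normalized last
    have hb (j : Fin L) (hj : (j : ℕ) = L - 1) : b j = true := by
      rwa [show j = last from Fin.ext hj]
    obtain ⟨v, rfl, rfl⟩ := exists_rowSpin_eq_colSpin_eq a b hb
    exact ⟨v, funext fun ⟨i, j⟩ => by rw [wInv_apply, hab]⟩

end Torus

end SPMP

/-- structure of periodic ground states: the ground states of the periodic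
square plaquette model are exactly the configurations with no defects, the image of the
injective map `w⁻¹`, the configurations obtained from all-plus by flipping an arbitrary set
of rows and columns, and there are `2^{2L-1}` of them. -/
theorem periodic_ground_state_structure (L : ℕ) (hL : 1 ≤ L) :
    GroundP L = {σ : ConfigP L | ∀ x : Fin L × Fin L, plaqP L σ x = 1} ∧
    Function.Injective (wInv L) ∧
    GroundP L = Set.range (wInv L) ∧
    (GroundP L).ncard = 2 ^ (2 * L - 1) ∧
    GroundP L = {σ : ConfigP L | ∃ A B : Finset (Fin L),
      σ = fun z => (decide (z.2 ∈ A) == decide (z.1 ∈ B))} := by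
  have hinj : Function.Injective (wInv L) := wInv_injective hL
  have hground (σ : ConfigP L) : σ ∈ GroundP L ↔ IsRowColProduct σ :=
    mem_groundP_iff.trans forall_plaqP_eq_one_iff
  have hrange : GroundP L = Set.range (wInv L) :=
    Set.ext fun σ => (hground σ).trans (mem_range_wInv_iff hL).symm
  have hcard : (GroundP L).ncard = 2 ^ (2 * L - 1) := by
    rw [hrange, Set.ncard_range_of_injective hinj]
    simp
  exact ⟨Set.ext fun _ => mem_groundP_iff, hinj, hrange, hcard,
    Set.ext fun σ => (hground σ).trans isRowColProduct_iff_exists_finset⟩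

end
end
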